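/- arXiv:2412.20729 — 2 statements merged into one kernel-verified Lean document; each statement's English description precedes it below -/
import Mathlib

section
/- Let G be a connected chordal graph with a minimal rooted tree representation T. Let X be a subtree of T rooted at x, let z ∈ V(X), and let Q be the x–z path in X. Let 𝒫 be a family of longest paths of G such that X has the core capture property for 𝒫. Then there is a set A ⊆ V(G) with |A| ≤ 4 · ccg(X, x) + 5 such that the family 𝒫′ of paths in 𝒫 that are disjoint from A is either empty, or there is a component X′ of X − V(Q) such that X′ has the core capture property for 𝒫′. -/
open SimpleGraph

/-- A graph is chordal if every cycle on at least 4 vertices has a chord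
(an edge of the graph joining two vertices of the cycle that is not an edge of the cycle). -/
def IsChordal {V : Type} (G : SimpleGraph V) : Prop :=
  ∀ (v : V) (c : G.Walk v v), c.IsCycle → 4 ≤ c.length →
    ∃ a b : V, a ∈ c.support ∧ b ∈ c.support ∧ G.Adj a b ∧ s(a, b) ∉ c.edges

/-- A tree representation of `G` with host tree `T`: each vertex `u` of `G` gets a
nonempty subtree `S u` of `T`, and distinct vertices are adjacent iff their subtrees meet. -/
structure TreeRep {V W : Type} (G : SimpleGraph V) (T : SimpleGraph W) : Type where
  isTree : T.IsTree
  S : V → Set W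
  subtree_connected : ∀ u : V, (T.induce (S u)).Connected
  adj_iff : ∀ u v : V, u ≠ v → (G.Adj u v ↔ (S u ∩ S v).Nonempty)

/-- A tree representation is minimal if no tree representation of `G` has a host tree
with fewer vertices. -/
def TreeRep.IsMinimal {V W : Type} [Fintype W] {G : SimpleGraph V} {T : SimpleGraph W}
    (_R : TreeRep G T) : Prop :=
  ∀ (W' : Type) [Fintype W'] (T' : SimpleGraph W'),
    Nonempty (TreeRep G T') → Fintype.card W ≤ Fintype.card W'

/-- The bag of a host tree vertex `x`. -/
def TreeRep.bag {V W : Type} {G : SimpleGraph V} {T : SimpleGraph W}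
    (R : TreeRep G T) (x : W) : Set V :=
  {u : V | x ∈ R.S u}

/-- In `T` rooted at `r`, the (vertex set of the) subtree rooted at `x`: all vertices `w`
such that the `r`–`w` path contains `x`. -/
def rootedSubtree {W : Type} (T : SimpleGraph W) (r x : W) : Set W :=
  {w : W | ∀ p : T.Walk r w, p.IsPath → x ∈ p.support}

/-- The core of a subgraph `H` of `G`: the union over edges `uv` of `H` of `V(S u ∩ S v)`,
a set of host-tree vertices. -/
def TreeRep.core {V W : Type} {G : SimpleGraph V} {T : SimpleGraph W}
    (R : TreeRep G T) (H : G.Subgraph) : Set W :=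
  {t : W | ∃ u v : V, H.Adj u v ∧ t ∈ R.S u ∧ t ∈ R.S v}

/-- `C` is a connected component of the subgraph of `T` induced on the vertex set `s`. -/
def IsCompOf {W : Type} (T : SimpleGraph W) (s C : Set W) : Prop :=
  C.Nonempty ∧ C ⊆ s ∧ (T.induce C).Connected ∧
    ∀ ⦃a b : W⦄, a ∈ C → b ∈ s → T.Adj a b → b ∈ C

/-- A graph is 2-connected if it has more than 2 vertices and deleting any one vertex
leaves it connected. -/
def TwoConnected {V : Type} (G : SimpleGraph V) : Prop :=
  2 < Nat.card V ∧ ∀ v : V, (G.induce {v}ᶜ).Connected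

/-- `G` is `k`-connected: more than `k` vertices, and deleting fewer than `k` vertices
leaves it connected. -/
def IsKConnectedGraph {V : Type} (G : SimpleGraph V) (k : ℕ) : Prop :=
  k < Nat.card V ∧ ∀ s : Set V, s.Finite → s.ncard < k → (G.induce sᶜ).Connected

/-- The vertex connectivity `κ(G)`: the maximum `k` such that `G` is `k`-connected. -/
noncomputable def vertexConnectivity {V : Type} (G : SimpleGraph V) : ℕ :=
  sSup {k : ℕ | IsKConnectedGraph G k}

/-- `p` is a path of maximum length in `G`. -/
def IsLongestPath {V : Type} (G : SimpleGraph V) {a b : V} (p : G.Walk a b) : Prop :=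
  p.IsPath ∧ ∀ (c d : V) (q : G.Walk c d), q.IsPath → q.length ≤ p.length

/-- `c` is a cycle of maximum length in `G`. -/
def IsLongestCycle {V : Type} (G : SimpleGraph V) {a : V} (c : G.Walk a a) : Prop :=
  c.IsCycle ∧ ∀ (d : V) (q : G.Walk d d), q.IsCycle → q.length ≤ c.length

/-- The longest path transversal number of `G`: the least size of a set of vertices
meeting every longest path. -/
noncomputable def lpt {V : Type} (G : SimpleGraph V) : ℕ :=
  sInf {k : ℕ | ∃ A : Set V, A.Finite ∧ A.ncard = k ∧
    ∀ (a b : V) (p : G.Walk a b), IsLongestPath G p → ∃ v ∈ A, v ∈ p.support}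

/-- The longest cycle transversal number of `G`: the least size of a set of vertices
meeting every longest cycle. -/
noncomputable def lct {V : Type} (G : SimpleGraph V) : ℕ :=
  sInf {k : ℕ | ∃ A : Set V, A.Finite ∧ A.ncard = k ∧
    ∀ (a : V) (c : G.Walk a a), IsLongestCycle G c → ∃ v ∈ A, v ∈ c.support}

/-- `DQX T q X Q0`: the union, over `y ∈ Q0`, of the component of `X − E(Q)` containing
`y` (all vertices joined to some `y ∈ Q0` by a walk inside `X` avoiding the edges of `q`). -/
def DQX {W : Type} (T : SimpleGraph W) {x z : W} (q : T.Walk x z) (X : Set W)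
    (Q0 : Set W) : Set W :=
  {w : W | ∃ y ∈ Q0, ∃ d : (T.deleteEdges {e : Sym2 W | e ∈ q.edges}).Walk y w,
    ∀ a ∈ d.support, a ∈ X}

/-- Cutter can force the Cutter–Chooser game from position `(X, x)` (a subtree `X` of the
host tree, rooted at `x`) to end within `t` rounds: Cutter picks `z ∈ X` and cuts along the
`x`–`z` path `Q` in `X`; either `X = Q` (game over), or for every component `X'` of
`X − V(Q)` (with its root `x'`, the vertex of `X'` adjacent to `Q`) that Chooser may pick,
Cutter wins within `t - 1` further rounds. -/
def cutterWins {W : Type} (T : SimpleGraph W) : ℕ → Set W → W → Prop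
  | 0, _, _ => False
  | t + 1, X, x =>
      ∃ z ∈ X, ∃ p : T.Walk x z, p.IsPath ∧ (∀ w ∈ p.support, w ∈ X) ∧
        (X = {w : W | w ∈ p.support} ∨
          ∀ (X' : Set W) (x' : W), IsCompOf T (X \ {w : W | w ∈ p.support}) X' →
            x' ∈ X' → (∃ u ∈ p.support, T.Adj u x') → cutterWins T t X' x')

/-- `ccg(X, x)`: the number of rounds of the Cutter–Chooser game on the subtree `X` of the
host tree rooted at `x`, under optimal play. -/
noncomputable def ccgOn {W : Type} (T : SimpleGraph W) (X : Set W) (x : W) : ℕ :=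
  sInf {t : ℕ | cutterWins T t X x}

/-- `ccg(T)`: the minimum over roots `r` of `ccg(T, r)`. -/
noncomputable def ccg {W : Type} (T : SimpleGraph W) : ℕ :=
  sInf (Set.range fun r : W => ccgOn T Set.univ r)

/-- A subdivided caterpillar: a tree having a (spine) path containing every vertex of
degree at least 3. -/
def IsSubdividedCaterpillar {W : Type} (T : SimpleGraph W) : Prop :=
  T.IsTree ∧ ∃ (a b : W) (q : T.Walk a b), q.IsPath ∧
    ∀ v : W, 3 ≤ (T.neighborSet v).ncard → v ∈ q.support

/-- A subdivided star: a tree with at most one vertex of degree at least 3. -/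
def IsSubdividedStar {W : Type} (T : SimpleGraph W) : Prop :=
  T.IsTree ∧ ∀ v w : W, 3 ≤ (T.neighborSet v).ncard → 3 ≤ (T.neighborSet w).ncard → v = w

/-- A leaf: a vertex of degree 1. -/
def IsLeaf {W : Type} (T : SimpleGraph W) (v : W) : Prop := (T.neighborSet v).ncard = 1

/-- `mf T`: the maximum over edges `e` of `T` of the minimum number of leaves of `T`
contained in a component of `T − e`. -/
noncomputable def mf {W : Type} (T : SimpleGraph W) : ℕ :=
  sSup {k : ℕ | ∃ u v : W, T.Adj u v ∧
    k = min {w : W | IsLeaf T w ∧ (T.deleteEdges {s(u, v)}).Reachable u w}.ncard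
            {w : W | IsLeaf T w ∧ (T.deleteEdges {s(u, v)}).Reachable v w}.ncard}

/-- In `T` rooted at `r`, `v` is a child of `u`. -/
def IsChildIn {W : Type} (T : SimpleGraph W) (r u v : W) : Prop :=
  T.Adj u v ∧ ∀ p : T.Walk r v, p.IsPath → u ∈ p.support

/-- In `T` rooted at `r`, `u` is childless. -/
def IsChildlessIn {W : Type} (T : SimpleGraph W) (r u : W) : Prop :=
  ¬ ∃ v : W, IsChildIn T r u v


/-! ### Lists as paths -/

/-- A path, given as the list of its vertices. -/
def LIsP {V : Type} (G : SimpleGraph V) (l : List V) : Prop := l.IsChain G.Adj ∧ l.Nodup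

/-- A longest path, given as the list of its vertices. -/
def LLP {V : Type} (G : SimpleGraph V) (l : List V) : Prop :=
  LIsP G l ∧ ∀ l', LIsP G l' → l'.length ≤ l.length

theorem LIsP.reverse {V : Type} {G : SimpleGraph V} {l : List V} (h : LIsP G l) :
    LIsP G l.reverse := by
  refine ⟨?_, List.nodup_reverse.2 h.2⟩
  rw [List.isChain_reverse]
  exact h.1.imp (fun a b hab => hab.symm)

theorem LLP.reverse {V : Type} {G : SimpleGraph V} {l : List V} (h : LLP G l) :
    LLP G l.reverse := by
  refine ⟨h.1.reverse, fun l' hl' => ?_⟩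
  simpa using h.2 l' hl'

theorem lmax {V : Type} [Fintype V] (p : List V → Prop) (hN : ∀ l, p l → l.Nodup)
    (h : ∃ l, p l) : ∃ l, p l ∧ ∀ l', p l' → l'.length ≤ l.length := by
  classical
  have hb : ∀ n ∈ {n | ∃ l, p l ∧ l.length = n}, n ≤ Fintype.card V := by
    rintro n ⟨l, hl, rfl⟩
    exact (hN l hl).length_le_card
  have hm := Nat.sSup_mem (s := {n | ∃ l, p l ∧ l.length = n})
    (by obtain ⟨l, hl⟩ := h; exact ⟨_, l, hl, rfl⟩) ⟨_, hb⟩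
  obtain ⟨l, hl, he⟩ := hm
  refine ⟨l, hl, fun l' hl' => ?_⟩
  rw [he]
  exact le_csSup ⟨_, hb⟩ ⟨l', hl', rfl⟩

theorem split_first {V : Type} (p : V → Prop) (l : List V) (h : ∃ e ∈ l, ¬ p e) :
    ∃ s u t, l = s ++ u :: t ∧ (∀ w ∈ s, p w) ∧ ¬ p u := by
  induction l with
  | nil => simp at h
  | cons a l ih =>
    by_cases ha : p a
    · obtain ⟨e, he, hpe⟩ := h
      have : ∃ e ∈ l, ¬ p e := by
        rcases List.mem_cons.1 he with rfl | h
        · exact absurd ha hpe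
        · exact ⟨e, h, hpe⟩
      obtain ⟨s, u, t, rfl, hs, hu⟩ := ih this
      exact ⟨a :: s, u, t, by simp, by simpa [ha] using hs, hu⟩
    · exact ⟨[], a, l, by simp, by simp, ha⟩

theorem split_last {V : Type} (p : V → Prop) (l : List V) (h : ∃ e ∈ l, ¬ p e) :
    ∃ s u t, l = s ++ u :: t ∧ (∀ w ∈ t, p w) ∧ ¬ p u := by
  obtain ⟨s, u, t, he, hs, hu⟩ := split_first p l.reverse (by simpa using h)
  refine ⟨t.reverse, u, s.reverse, ?_, by simpa using hs, hu⟩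
  have := congrArg List.reverse he
  simpa using this

theorem run_int {V : Type} (p : V → Prop) (la lb : List V) (m : V) (hm : p m)
    (ha : ∃ e ∈ la, ¬ p e) (hb : ∃ e ∈ lb, ¬ p e) :
    ∃ l1 u s u' l2, la ++ m :: lb = l1 ++ u :: (s ++ u' :: l2) ∧ s ≠ [] ∧
      (∀ w ∈ s, p w) ∧ ¬ p u ∧ ¬ p u' := by
  obtain ⟨s1, u1, t1, rfl, h1, h1'⟩ := split_last p la ha
  obtain ⟨s2, u2, t2, rfl, h2, h2'⟩ := split_first p lb hb
  refine ⟨s1, u1, t1 ++ m :: s2, u2, t2, by simp, by simp, ?_, h1', h2'⟩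
  intro w hw
  simp only [List.mem_append, List.mem_cons] at hw
  rcases hw with h | rfl | h
  · exact h1 _ h
  · exact hm
  · exact h2 _ h

theorem replace_mid {V : Type} {G : SimpleGraph V} {l1 s l2 mid : List V} {u u' : V}
    (h : LLP G (l1 ++ u :: (s ++ u' :: l2))) (hc : (u :: (mid ++ [u'])).IsChain G.Adj)
    (hn : mid.Nodup) (hd : ∀ w ∈ mid, w ∉ l1 ++ u :: (s ++ u' :: l2)) :
    mid.length ≤ s.length := by
  have hP : LIsP G (l1 ++ u :: (mid ++ u' :: l2)) := by
    constructor
    · have h1 := h.1.1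
      rw [List.isChain_split] at h1
      have h2 : (u :: s ++ u' :: l2).IsChain G.Adj := h1.2
      rw [List.isChain_split] at h2
      rw [List.isChain_split]
      refine ⟨h1.1, ?_⟩
      have : (u :: mid ++ u' :: l2).IsChain G.Adj := by
        rw [List.isChain_split]
        exact ⟨hc, h2.2⟩
      exact this
    · have h1 := h.1.2
      grind
  have := h.2 _ hP
  simp at this
  omega

theorem replace_init {V : Type} {G : SimpleGraph V} {s l2 mid : List V} {u : V}
    (h : LLP G (s ++ u :: l2)) (hc : (mid ++ [u]).IsChain G.Adj)
    (hn : mid.Nodup) (hd : ∀ w ∈ mid, w ∉ s ++ u :: l2) :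
    mid.length ≤ s.length := by
  have hP : LIsP G (mid ++ u :: l2) := by
    constructor
    · have h1 := h.1.1
      rw [List.isChain_split] at h1 ⊢
      exact ⟨hc, h1.2⟩
    · have h1 := h.1.2
      grind
  have := h.2 _ hP
  simp at this
  omega

theorem LLP.ne_nil {V : Type} {G : SimpleGraph V} {l : List V} (h : LLP G l) (v : V) :
    l ≠ [] := by
  rintro rfl
  have := h.2 [v] ⟨by simp, by simp⟩
  simp at this

/-! ### Abstract rooted representations -/

/-- Abstract rooted tree representation over the tree order. -/
structure RRep {V : Type} (W : Type) [PartialOrder W] (G : SimpleGraph V) where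
  S : V → Set W
  chain : ∀ {x y w : W}, x ≤ w → y ≤ w → x ≤ y ∨ y ≤ x
  ne : ∀ v, (S v).Nonempty
  adj : ∀ u v, u ≠ v → (G.Adj u v ↔ (S u ∩ S v).Nonempty)
  sep : ∀ {v b s t}, s ∈ S v → b ≤ s → t ∈ S v → ¬ b ≤ t → b ∈ S v ∧ ∃ y ∈ S v, y ⋖ b

namespace RRep
variable {V W : Type} [PartialOrder W] {G : SimpleGraph V} (R : RRep W G)

/-- Vertices whose subtree lies below `b`. -/
def I (b : W) (v : V) : Prop := ∀ t ∈ R.S v, b ≤ t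

/-- The core of a path (as a list). -/
def cor (l : List V) (t : W) : Prop :=
  ∃ l1 u v l2, l = l1 ++ u :: v :: l2 ∧ t ∈ R.S u ∧ t ∈ R.S v

/-- `l` has a core vertex below `b`. -/
def touch (l : List V) (b : W) : Prop := ∃ t, R.cor l t ∧ b ≤ t

/-- Internal piece of `l` in `b`. -/
def IntP (l : List V) (b : W) : Prop :=
  ∃ l1 u s uu l2, l = l1 ++ u :: (s ++ uu :: l2) ∧ s ≠ [] ∧ (∀ w ∈ s, R.I b w) ∧
    ¬ R.I b u ∧ ¬ R.I b uu

/-- Initial piece of `l` in `b`. -/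
def EndP (l : List V) (b : W) : Prop :=
  ∃ s u t, l = s ++ u :: t ∧ s ≠ [] ∧ (∀ w ∈ s, R.I b w) ∧ ¬ R.I b u

theorem cov_le (R : RRep W G) {y b u : W} (h : y ⋖ b) (hu : u ≤ b) : u = b ∨ u ≤ y := by
  rcases R.chain h.le hu with h1 | h1
  · rcases eq_or_lt_of_le h1 with h2 | h2
    · exact Or.inr h2.ge
    · rcases eq_or_lt_of_le hu with h3 | h3
      · exact Or.inl h3
      · exact absurd h3 (h.2 h2)
  · exact Or.inr h1

theorem par_unique (R : RRep W G) {y y' b : W} (h : y ⋖ b) (h' : y' ⋖ b) : y = y' := by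
  apply le_antisymm
  · rcases R.cov_le h' h.le with h1 | h1
    · exact absurd h1 h.lt.ne
    · exact h1
  · rcases R.cov_le h h'.le with h1 | h1
    · exact absurd h1 h'.lt.ne
    · exact h1

theorem sep_bag {y b s : W} {v : V} (h : y ⋖ b) (hs : s ∈ R.S v) (hb : b ≤ s)
    (hv : ¬ R.I b v) : b ∈ R.S v ∧ y ∈ R.S v := by
  unfold I at hv
  push Not at hv
  obtain ⟨t, ht, htb⟩ := hv
  obtain ⟨h1, y', hy', hc⟩ := R.sep hs hb ht htb
  exact ⟨h1, R.par_unique h hc ▸ hy'⟩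

theorem convex {x b t : W} {v : V} (hx : x ∈ R.S v) (hxb : x ≤ b) (hbt : b ≤ t)
    (ht : t ∈ R.S v) : b ∈ R.S v := by
  rcases eq_or_lt_of_le hxb with h | h
  · exact h ▸ hx
  · exact (R.sep ht hbt hx h.not_ge).1

theorem not_I_of_bag {y b : W} {v : V} (h : y ⋖ b) (hv : y ∈ R.S v) : ¬ R.I b v :=
  fun hI => h.lt.not_ge (hI y hv)

theorem I_mono {x b : W} {v : V} (h : x ≤ b) (hv : R.I b v) : R.I x v :=
  fun t ht => h.trans (hv t ht)

theorem adj_bag {y : W} {u v : V} (h : u ≠ v) (hu : y ∈ R.S u) (hv : y ∈ R.S v) : G.Adj u v :=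
  (R.adj u v h).2 ⟨y, hu, hv⟩

theorem adj_share {u v : V} (h : G.Adj u v) : ∃ t, t ∈ R.S u ∧ t ∈ R.S v :=
  (R.adj u v h.ne).1 h

theorem bag_of_adj {y b : W} {u v : V} (h : y ⋖ b) (ha : G.Adj u v) (hv : R.I b v)
    (hu : ¬ R.I b u) : y ∈ R.S u := by
  obtain ⟨t, ht, ht'⟩ := R.adj_share ha
  exact (R.sep_bag h ht (hv t ht') hu).2

theorem clique {l : List V} {t : W} (hl : LLP G l) (ht : R.cor l t) {w : V}
    (hw : t ∈ R.S w) : w ∈ l := by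
  by_contra hwl
  obtain ⟨l1, u, v, l2, rfl, hu, hv⟩ := ht
  have := replace_mid (s := []) (mid := [w]) (l1 := l1) (u := u) (u' := v) (l2 := l2) hl
    (by
      have h1 : u ≠ w := by rintro rfl; simp at hwl
      have h2 : w ≠ v := by rintro rfl; simp at hwl
      simp [R.adj_bag h1 hu hw, R.adj_bag h2 hw hv])
    (by simp) (by simpa using hwl)
  simp at this

theorem cor_reverse {l : List V} {t : W} (h : R.cor l t) : R.cor l.reverse t := by
  obtain ⟨l1, u, v, l2, rfl, hu, hv⟩ := h
  exact ⟨l2.reverse, v, u, l1.reverse, by simp, hv, hu⟩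

theorem IntP_reverse {l : List V} {b : W} (h : R.IntP l b) : R.IntP l.reverse b := by
  obtain ⟨l1, u, s, u', l2, rfl, h1, h2, h3, h4⟩ := h
  exact ⟨l2.reverse, u', s.reverse, u, l1.reverse, by simp, by simpa using h1,
    by simpa using h2, h4, h3⟩

/-- a vertex in `I b` of a path of length at least two makes it touch `b`. -/
theorem touch_of_I {l : List V} {b : W} {v : V} (hl : LLP G l) (hlen : 2 ≤ l.length)
    (hv : v ∈ l) (hI : R.I b v) : R.touch l b := by
  obtain ⟨la, lb, rfl⟩ := List.append_of_mem hv
  rcases lb with _ | ⟨w, lb⟩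
  · rcases List.eq_nil_or_concat la with rfl | ⟨l', w, rfl⟩
    · simp at hlen
    · have hc := hl.1.1
      have : G.Adj w v := by
        rw [List.isChain_split] at hc
        have := hc.1
        rw [List.concat_eq_append, List.append_assoc] at this
        simp only [List.singleton_append] at this
        rw [List.isChain_append_cons_cons] at this
        exact this.2.1
      obtain ⟨t, h1, h2⟩ := R.adj_share this
      exact ⟨t, ⟨l', w, v, [], by simp, h1, h2⟩, hI t h2⟩
  · have hc := hl.1.1
    rw [List.isChain_append_cons_cons] at hc
    obtain ⟨t, h1, h2⟩ := R.adj_share hc.2.1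
    exact ⟨t, ⟨la, v, w, lb, by simp, h1, h2⟩, hI t h1⟩

/-! ### Internal pieces -/

theorem mid_exists {N : List V} {c c' a a' : V} {y : W} (hc : y ∈ R.S c) (hc' : y ∈ R.S c')
    (ha : y ∈ R.S a) (ha' : y ∈ R.S a') (hcc : c ≠ c') (h1 : a ≠ c') (h2 : a' ≠ c)
    (hN : LIsP G (a :: (N ++ [a']))) (hcN : c ∉ N) (hcN' : c' ∉ N) :
    ∃ mid : List V, N.length + 2 ≤ mid.length ∧ mid.Nodup ∧
      (∀ w ∈ mid, w = c ∨ w = c' ∨ w = a ∨ w = a' ∨ w ∈ N) ∧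
      (∀ u u', G.Adj u c → G.Adj c' u' → (u :: (mid ++ [u'])).IsChain G.Adj) := by
  have key : ∀ e1 e2 : List V, (∀ u, G.Adj u c → (u :: (e1 ++ [a])).IsChain G.Adj) →
      (∀ u', G.Adj c' u' → (a' :: (e2 ++ [u'])).IsChain G.Adj) → 
      (∀ u u', G.Adj u c → G.Adj c' u' → 
        (u :: ((e1 ++ a :: (N ++ a' :: e2)) ++ [u'])).IsChain G.Adj) := by
    intro e1 e2 h1 h2 u u' hu hu'
    have : (u :: e1 ++ a :: (N ++ a' :: (e2 ++ [u']))).IsChain G.Adj := by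
      rw [List.isChain_split]
      refine ⟨h1 u hu, ?_⟩
      have : (a :: N ++ a' :: (e2 ++ [u'])).IsChain G.Adj := by
        rw [List.isChain_split]
        exact ⟨hN.1, h2 u' hu'⟩
      exact this
    simpa using this
  have hnd := hN.2
  by_cases e1 : a = c <;> by_cases e2 : a' = c'
  · refine ⟨_, ?_, ?_, ?_, key [] [] ?_ ?_⟩
    · simp
    · grind
    · grind
    · intro u hu; simp [e1, hu]
    · intro u hu; simp [e2, hu]
  · refine ⟨_, ?_, ?_, ?_, key [] [c'] ?_ ?_⟩
    · simp
    · grind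
    · grind
    · intro u hu; simp [e1, hu]
    · intro u hu; simp [hu, R.adj_bag e2 ha' hc']
  · refine ⟨_, ?_, ?_, ?_, key [c] [] ?_ ?_⟩
    · simp
    · grind
    · grind
    · intro u hu; simp [hu, R.adj_bag (Ne.symm e1) hc ha]
    · intro u hu; simp [e2, hu]
  · refine ⟨_, ?_, ?_, ?_, key [c] [c'] ?_ ?_⟩
    · simp
    · grind
    · grind
    · intro u hu; simp [hu, R.adj_bag (Ne.symm e1) hc ha]
    · intro u hu; simp [hu, R.adj_bag e2 ha' hc']

theorem int_ends {l1 s l2 : List V} {u u' : V} {y b : W} (h : y ⋖ b)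
    (hl : LIsP G (l1 ++ u :: (s ++ u' :: l2))) (hs : s ≠ []) (hsI : ∀ w ∈ s, R.I b w)
    (hu : ¬ R.I b u) (hu' : ¬ R.I b u') :
    y ∈ R.S u ∧ y ∈ R.S u' ∧ LIsP G (u :: (s ++ [u'])) := by
  have hP : LIsP G (u :: (s ++ [u'])) := by
    constructor
    · have h1 := hl.1
      rw [List.isChain_split] at h1
      have h2 : (u :: s ++ u' :: l2).IsChain G.Adj := h1.2
      rw [List.isChain_split] at h2
      exact h2.1
    · have := hl.2
      grind
  refine ⟨?_, ?_, hP⟩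
  · rcases s with _ | ⟨w, s⟩
    · exact absurd rfl hs
    · have h1 := hP.1
      simp only [List.cons_append, List.isChain_cons_cons] at h1
      exact R.bag_of_adj h h1.1 (hsI w (by simp)) hu
  · rcases List.eq_nil_or_concat s with rfl | ⟨s, w, rfl⟩
    · exact absurd rfl hs
    · have h1 : (u :: s ++ w :: u' :: []).IsChain G.Adj := by simpa using hP.1
      rw [List.isChain_append_cons_cons] at h1
      exact R.bag_of_adj h h1.2.1.symm (hsI w (by simp)) hu'

theorem INT [Fintype V] (B : Set W) {c c' : V} (hcc : c ≠ c')
    (hB : ∀ b ∈ B, ∃ y, y ⋖ b ∧ y ∈ R.S c ∧ y ∈ R.S c') :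
    ∃ A : Set V, A.ncard ≤ 2 ∧
      ((∀ l, LLP G l → c ∉ l → c' ∉ l → (∀ v ∈ A, v ∉ l) → ∀ b ∈ B, ¬ R.IntP l b) ∨
      ∃ b ∈ B, ∀ l, LLP G l → c ∉ l → c' ∉ l → (∀ v ∈ A, v ∉ l) →
        (∃ b' ∈ B, R.IntP l b') → ∃ v ∈ l, R.I b v) := by
  classical
  let p : List V → Prop := fun N => ∃ b ∈ B, ∃ y a a', y ⋖ b ∧ y ∈ R.S a ∧ y ∈ R.S a' ∧
    LIsP G (a :: (N ++ [a'])) ∧ N ≠ [] ∧ ∀ w ∈ N, R.I b w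
  have hp : ∀ l, LLP G l → ∀ b ∈ B, ∀ l1 u s u' l2, l = l1 ++ u :: (s ++ u' :: l2) → s ≠ [] →
      (∀ w ∈ s, R.I b w) → ¬ R.I b u → ¬ R.I b u' → p s := by
    rintro l hl b hb l1 u s u' l2 rfl h1 h2 h3 h4
    obtain ⟨y, hy, -⟩ := hB b hb
    obtain ⟨h5, h6, h7⟩ := R.int_ends hy hl.1 h1 h2 h3 h4
    exact ⟨b, hb, y, u, u', hy, h5, h6, h7, h1, h2⟩
  by_cases hex : ∃ N, p N
  · obtain ⟨N, ⟨b, hb, y, a, a', hy, ha, ha', hN, hN0, hNI⟩, hmax⟩ := lmax p (by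
      rintro l ⟨b, hb, y, a, a', hy, ha, ha', hN, hN0, hNI⟩
      have := hN.2
      grind) hex
    refine ⟨{a, a'}, (Set.ncard_insert_le _ _).trans (by simp), Or.inr ⟨b, hb, ?_⟩⟩
    rintro l hl hcl hcl' hA ⟨b', hb', l1, u, s, u', l2, rfl, h1, h2, h3, h4⟩
    by_contra hno
    push Not at hno
    have hsN := hmax s (hp _ hl b' hb' l1 u s u' l2 rfl h1 h2 h3 h4)
    obtain ⟨y', hy', hc1, hc1'⟩ := hB b' hb'
    obtain ⟨y0, hy0, hc, hc'⟩ := hB b hb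
    obtain rfl := R.par_unique hy hy0
    obtain ⟨h5, h6, h7⟩ := R.int_ends hy' hl.1 h1 h2 h3 h4
    have hal : a ∉ l1 ++ u :: (s ++ u' :: l2) := hA a (by simp)
    have hal' : a' ∉ l1 ++ u :: (s ++ u' :: l2) := hA a' (by simp)
    have hcN : c ∉ N := fun h => R.not_I_of_bag hy hc (hNI _ h)
    have hcN' : c' ∉ N := fun h => R.not_I_of_bag hy hc' (hNI _ h)
    have fin : ∀ e e' : V, y ∈ R.S e → y ∈ R.S e' → y' ∈ R.S e → y' ∈ R.S e' → e ≠ e' →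
        a ≠ e' → a' ≠ e → e ∉ N → e' ∉ N → e ∉ l1 ++ u :: (s ++ u' :: l2) → 
        e' ∉ l1 ++ u :: (s ++ u' :: l2) → False := by
      intro e e' k1 k2 k3 k4 k5 k6 k7 k8 k9 k10 k11
      obtain ⟨mid, m1, m2, m3, m4⟩ := R.mid_exists k1 k2 ha ha' k5 k6 k7 hN k8 k9
      have hue : u ≠ e := by rintro rfl; simp at k10
      have hue' : e' ≠ u' := by rintro rfl; simp at k11
      have := replace_mid hl (m4 u u' (R.adj_bag hue h5 k3) (R.adj_bag hue' k4 h6)) m2 (by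
        intro w hw
        rcases m3 w hw with rfl | rfl | rfl | rfl | h
        · exact k10
        · exact k11
        · exact hal
        · exact hal'
        · exact fun h' => hno w h' (hNI w h))
      omega
    have haa' : a ≠ a' := by
      have := hN.2
      rintro rfl
      simp at this
    by_cases hsw : a ≠ c' ∧ a' ≠ c
    · exact fin c c' hc hc' hc1 hc1' hcc hsw.1 hsw.2 hcN hcN' hcl hcl'
    · refine fin c' c hc' hc hc1' hc1 hcc.symm ?_ ?_ hcN' hcN hcl' hcl
      · grind
      · grind
  · refine ⟨∅, by simp, Or.inl ?_⟩
    rintro l hl hcl hcl' - b hb ⟨l1, u, s, u', l2, he, h1, h2, h3, h4⟩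
    exact hex ⟨s, hp _ hl b hb l1 u s u' l2 he h1 h2 h3 h4⟩

/-! ### End pieces -/

theorem end_ends {s t : List V} {u : V} {y b : W} (h : y ⋖ b)
    (hl : LIsP G (s ++ u :: t)) (hs : s ≠ []) (hsI : ∀ w ∈ s, R.I b w)
    (hu : ¬ R.I b u) : y ∈ R.S u ∧ LIsP G (s ++ [u]) := by
  have hP : LIsP G (s ++ [u]) := by
    constructor
    · have h1 := hl.1
      rw [List.isChain_split] at h1
      exact h1.1
    · have := hl.2
      grind
  refine ⟨?_, hP⟩
  rcases List.eq_nil_or_concat s with rfl | ⟨s, w, rfl⟩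
  · exact absurd rfl hs
  · have h1 : (s ++ w :: u :: []).IsChain G.Adj := by simpa using hP.1
    rw [List.isChain_append_cons_cons] at h1
    exact R.bag_of_adj h h1.2.1.symm (hsI w (by simp)) hu

theorem END [Fintype V] (B : Set W) {c : V} (hB : ∀ b ∈ B, ∃ y, y ⋖ b ∧ y ∈ R.S c) :
    ∃ A : Set V, A.ncard ≤ 1 ∧
      ((∀ l, LLP G l → c ∉ l → (∀ v ∈ A, v ∉ l) → ∀ b ∈ B, ¬ R.EndP l b) ∨
      ∃ b ∈ B, ∀ l, LLP G l → c ∉ l → (∀ v ∈ A, v ∉ l) →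
        (∃ b' ∈ B, R.EndP l b') → ∃ v ∈ l, R.I b v) := by
  classical
  let p : List V → Prop := fun M => ∃ b ∈ B, ∃ y a, y ⋖ b ∧ y ∈ R.S a ∧
    LIsP G (M ++ [a]) ∧ M ≠ [] ∧ ∀ w ∈ M, R.I b w
  have hp : ∀ l, LLP G l → ∀ b ∈ B, ∀ s u t, l = s ++ u :: t → s ≠ [] →
      (∀ w ∈ s, R.I b w) → ¬ R.I b u → p s := by
    rintro l hl b hb s u t rfl h1 h2 h3
    obtain ⟨y, hy, -⟩ := hB b hb
    obtain ⟨h5, h7⟩ := R.end_ends hy hl.1 h1 h2 h3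
    exact ⟨b, hb, y, u, hy, h5, h7, h1, h2⟩
  by_cases hex : ∃ M, p M
  · obtain ⟨M, ⟨b, hb, y, a, hy, ha, hM, hM0, hMI⟩, hmax⟩ := lmax p (by
      rintro l ⟨b, hb, y, a, hy, ha, hN, hN0, hNI⟩
      have := hN.2
      grind) hex
    refine ⟨{a}, by simp, Or.inr ⟨b, hb, ?_⟩⟩
    rintro l hl hcl hA ⟨b', hb', s, u, t, rfl, h1, h2, h3⟩
    by_contra hno
    push Not at hno
    have hsM := hmax s (hp _ hl b' hb' s u t rfl h1 h2 h3)
    obtain ⟨y', hy', hc1⟩ := hB b' hb'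
    obtain ⟨y0, hy0, hc⟩ := hB b hb
    obtain rfl := R.par_unique hy hy0
    obtain ⟨h5, h7⟩ := R.end_ends hy' hl.1 h1 h2 h3
    have hal : a ∉ s ++ u :: t := hA a (by simp)
    have hcM : c ∉ M := fun h => R.not_I_of_bag hy hc (hMI _ h)
    have hcu : c ≠ u := by rintro rfl; simp at hcl
    have hnd := hM.2
    by_cases hac : a = c
    · subst hac
      have := replace_init (mid := M ++ [a]) hl (by
          have : (M ++ a :: u :: []).IsChain G.Adj := by
            rw [List.isChain_append_cons_cons]
            exact ⟨hM.1, R.adj_bag hcu hc1 h5, by simp⟩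
          simpa using this) hnd (by
          intro w hw
          rcases List.mem_append.1 hw with h | h
          · exact fun h' => hno w h' (hMI w h)
          · simp only [List.mem_singleton] at h
            exact h ▸ hal)
      simp at this
      omega
    · have := replace_init (mid := M ++ [a, c]) hl (by
          have : (M ++ a :: c :: [u]).IsChain G.Adj := by
            rw [List.isChain_append_cons_cons]
            exact ⟨hM.1, R.adj_bag hac ha hc, by simp [R.adj_bag hcu hc1 h5]⟩
          simpa using this) (by grind) (by
          intro w hw
          rcases List.mem_append.1 hw with h | h
          · exact fun h' => hno w h' (hMI w h)
          · simp only [List.mem_cons, List.not_mem_nil, or_false] at h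
            rcases h with h | h
            · exact h ▸ hal
            · exact h ▸ hcl)
      simp at this
      omega
  · refine ⟨∅, by simp, Or.inl ?_⟩
    rintro l hl hcl - b hb ⟨s, u, t, he, h1, h2, h3⟩
    exact hex ⟨s, hp _ hl b hb s u t he h1 h2 h3⟩

/-! ### The set-up along a path -/

theorem reach_lt [Finite W] {x z t : W} {u v : V} (hu : x ∈ R.S u) (hv : x ∈ R.S v)
    (hxt : x ≤ t) (htz : t ≤ z) (htv : t ∈ R.S v) (htu : t ∉ R.S u) :
    (R.S u ∩ Set.Icc x z).ncard < (R.S v ∩ Set.Icc x z).ncard := by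
  refine Set.ncard_lt_ncard ?_ (Set.toFinite _)
  rw [Set.ssubset_iff_of_subset]
  · exact ⟨t, ⟨htv, hxt, htz⟩, fun h => htu h.1⟩
  · rintro e ⟨he, hxe, hez⟩
    refine ⟨?_, hxe, hez⟩
    rcases R.chain htz hez with h | h
    · exact absurd (R.convex hu hxt h he) htu
    · exact R.convex hv hxe h htv

theorem setup [Finite V] [Finite W] {x z : W} (hxz : x ≤ z)
    (h2 : ∃ u v, u ≠ v ∧ x ∈ R.S u ∧ x ∈ R.S v) :
    ∃ c c' yy, c ≠ c' ∧ x ≤ yy ∧ yy ≤ z ∧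
      (∀ y, x ≤ y → y ≤ yy → y ∈ R.S c ∧ y ∈ R.S c') ∧
      (∀ b v, yy ⋖ b → b ≤ z → x ∈ R.S v → b ∈ R.S v → v = c) := by
  obtain ⟨u, v, huv, hu, hv⟩ := h2
  obtain ⟨c, hc, hcm⟩ := Set.exists_max_image {v | x ∈ R.S v}
    (fun v => (R.S v ∩ Set.Icc x z).ncard) (Set.toFinite _) ⟨u, hu⟩
  obtain ⟨c', hc', hcm'⟩ := Set.exists_max_image {v | x ∈ R.S v ∧ v ≠ c}
    (fun v => (R.S v ∩ Set.Icc x z).ncard) (Set.toFinite _) (by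
      by_cases h : u = c
      · exact ⟨v, hv, fun h' => huv (h.trans h'.symm)⟩
      · exact ⟨u, hu, h⟩)
  obtain ⟨yy, hyy⟩ := Set.Finite.exists_maximal (Set.toFinite (R.S c' ∩ Set.Icc x z))
    ⟨x, hc'.1, le_refl x, hxz⟩
  refine ⟨c, c', yy, hc'.2.symm, hyy.1.2.1, hyy.1.2.2, ?_, ?_⟩
  · intro y hxy hyyy
    have h1 : y ∈ R.S c' := R.convex hc'.1 hxy hyyy hyy.1.1
    refine ⟨?_, h1⟩
    by_contra h
    exact (hcm c' hc'.1).not_gt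
      (R.reach_lt hc hc'.1 hxy (hyyy.trans hyy.1.2.2) h1 h)
  · intro b v hb hbz hxv hbv
    by_contra h
    have hxb : x ≤ b := hyy.1.2.1.trans hb.le
    have hbc : b ∉ R.S c' := fun h' => hb.lt.not_ge (hyy.2 ⟨h', hxb, hbz⟩ hb.le)
    exact (hcm' v ⟨hxv, h⟩).not_gt (R.reach_lt hc'.1 hxv hxb hbz hbv hbc)

/-- Data at the top `x` of the path `Icc x z`. -/
structure Stp (x z : W) (c c' : V) (yy : W) : Prop where
  hcc : c ≠ c'
  hx : x ≤ yy
  hz : yy ≤ z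
  bag : ∀ y, x ≤ y → y ≤ yy → y ∈ R.S c ∧ y ∈ R.S c'
  sing : ∀ b v, yy ⋖ b → b ≤ z → x ∈ R.S v → b ∈ R.S v → v = c

/-- Off-branches of `Icc x yy`. -/
def BB (x yy : W) : Set W := {b | ∃ y, x ≤ y ∧ y ≤ yy ∧ y ⋖ b ∧ ¬ b ≤ yy}

variable {R}
variable {x z yy : W} {c c' : V}

theorem BB_par {b : W} (h : b ∈ BB x yy) (hs : R.Stp x z c c' yy) :
    ∃ y, y ⋖ b ∧ y ∈ R.S c ∧ y ∈ R.S c' := by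
  obtain ⟨y, h1, h2, h3, -⟩ := h
  exact ⟨y, h3, hs.bag y h1 h2⟩

theorem BB_le {b : W} (h : b ∈ BB x yy) : x ≤ b := by
  obtain ⟨y, h1, h2, h3, -⟩ := h
  exact h1.trans h3.le

theorem BB_cover [Finite W] (hx : x ≤ yy) {t : W} (ht : x ≤ t) :
    t ≤ yy ∨ ∃ b ∈ BB x yy, b ≤ t := by
  obtain ⟨m, hm⟩ := Set.Finite.exists_maximal (Set.toFinite {e | x ≤ e ∧ e ≤ yy ∧ e ≤ t})
    ⟨x, le_refl x, hx, ht⟩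
  by_cases h : m = t
  · exact Or.inl (h ▸ hm.1.2.1)
  · right
    obtain ⟨b, hb, hbt⟩ := exists_covBy_le_of_lt (lt_of_le_of_ne hm.1.2.2 h)
    refine ⟨b, ⟨m, hm.1.1, hm.1.2.1, hb, ?_⟩, hbt⟩
    intro hby
    exact hb.lt.not_ge (hm.2 ⟨hm.1.1.trans hb.le, hby, hbt⟩ hb.le)

theorem BB_onQ {d : W} (h : d ∈ BB x yy) (hs : R.Stp x z c c' yy) (hd : d ≤ z) : yy ⋖ d := by
  obtain ⟨y, h1, h2, h3, h4⟩ := h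
  rcases R.chain hd hs.hz with h5 | h5
  · exact absurd h5 h4
  · rcases R.cov_le h3 h5 with h6 | h6
    · exact absurd h6.ge h4
    · exact le_antisymm h2 h6 ▸ h3

theorem BB_disj {b d : W} (hb : b ∈ BB x yy) (hd : d ∈ BB x yy) {t : W}
    (h1 : b ≤ t) (h2 : d ≤ t) (R : RRep W G) : b = d := by
  have key : ∀ {b d : W}, b ∈ BB x yy → d ∈ BB x yy → b ≤ d → b = d := by
    rintro b d ⟨y, k1, k2, k3, k4⟩ ⟨y', k1', k2', k3', k4'⟩ h
    rcases R.cov_le k3' h with h5 | h5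
    · exact h5
    · exact absurd (h5.trans k2') k4
  rcases R.chain h1 h2 with h | h
  · exact key hb hd h
  · exact (key hd hb h).symm

theorem core_off {l : List V} (hs : R.Stp x z c c' yy) (hl : LLP G l) (hc : c ∉ l)
    {t : W} (ht : R.cor l t) (hxt : x ≤ t) : ¬ t ≤ yy :=
  fun h => hc (R.clique hl ht (hs.bag t hxt h).1)

theorem meet_d {d : W} (hs : R.Stp x z c c' yy) (hd : d ∈ BB x yy) (hdz : d ≤ z) {v : V}
    (hv : v ≠ c) {t : W} (ht : t ∈ R.S v) (hdt : d ≤ t) : R.I x v := by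
  by_contra h
  have hcov := BB_onQ hd hs hdz
  unfold I at h
  push Not at h
  obtain ⟨t', ht', hx'⟩ := h
  have h1 := (R.sep ht ((BB_le hd).trans hdt) ht' hx').1
  have h2 := (R.sep ht hdt ht' (fun h => hx' ((BB_le hd).trans h))).1
  exact hv (hs.sing d v hcov hdz h1 h2)

theorem C2 [Finite W] {l : List V} {d : W} (hs : R.Stp x z c c' yy) (hl : LLP G l)
    (hc : c ∉ l) (hd : d ∈ BB x yy) (hdz : d ≤ z) {p0 m : V} (hp0 : p0 ∈ l)
    (hp0x : ¬ R.I x p0) (hm : m ∈ l) (hmd : ∃ t ∈ R.S m, d ≤ t) :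
    ∃ b ∈ BB x yy, ¬ b ≤ z ∧ R.IntP l b := by
  have key : ∀ la lb : List V, LLP G (la ++ p0 :: lb) → c ∉ (la ++ p0 :: lb) → m ∈ lb → 
      ∃ b ∈ BB x yy, ¬ b ≤ z ∧ R.IntP (la ++ p0 :: lb) b := by
    intro la lb hl hc hm
    obtain ⟨s, u, t', rfl, hsP, huP⟩ := split_first (fun v => ¬ ∃ t ∈ R.S v, d ≤ t) lb
      ⟨m, hm, by simpa using hmd⟩
    simp only [not_not] at huP
    obtain ⟨s', p1, he⟩ : ∃ s' p1, p0 :: s = s' ++ [p1] := by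
      rcases List.eq_nil_or_concat (p0 :: s) with h | ⟨s', p1, h⟩
      · simp at h
      · exact ⟨s', p1, by simpa using h⟩
    have hp0P : ¬ ∃ t ∈ R.S p0, d ≤ t := by
      rintro ⟨t, ht, hdt⟩
      exact hp0x (meet_d hs hd hdz (by rintro rfl; simp at hc) ht hdt)
    have hp1P : ¬ ∃ t ∈ R.S p1, d ≤ t := by
      have : p1 ∈ p0 :: s := by rw [he]; simp
      rcases List.mem_cons.1 this with rfl | h
      · exact hp0P
      · exact hsP _ h
    have hle : la ++ p0 :: (s ++ u :: t') = (la ++ s') ++ p1 :: (u :: t') := by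
      have : la ++ p0 :: (s ++ u :: t') = la ++ (p0 :: s) ++ u :: t' := by simp
      rw [this, he]; simp
    have huc : u ≠ c := by rintro rfl; simp at hc
    obtain ⟨tu, htu, hdtu⟩ := huP
    have huI : R.I x u := meet_d hs hd hdz huc htu hdtu
    have hadj : G.Adj p1 u := by
      have h1 := hl.1.1
      rw [hle, List.isChain_append_cons_cons] at h1
      exact h1.2.1
    obtain ⟨t, ht1, ht2⟩ := R.adj_share hadj
    have hcor : ∀ t, t ∈ R.S p1 → t ∈ R.S u → R.cor (la ++ p0 :: (s ++ u :: t')) t :=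
      fun t h1 h2 => ⟨la ++ s', p1, u, t', hle, h1, h2⟩
    have hxt := huI t ht2
    rcases BB_cover hs.hx hxt with h | ⟨b, hb, hbt⟩
    · exact absurd h (core_off hs hl hc (hcor t ht1 ht2) hxt)
    · have hbd : b ≠ d := by rintro rfl; exact hp1P ⟨t, ht1, hbt⟩
      have hbz : ¬ b ≤ z := by
        intro h
        rcases R.chain h hdz with h' | h'
        · exact hbd (BB_disj hb hd h' le_rfl R)
        · exact hbd (BB_disj hb hd le_rfl h' R)
      have hub : ¬ R.I b u := by
        intro h
        exact hbd (BB_disj hb hd (h tu htu) hdtu R)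
      have hb' := hb
      obtain ⟨y, hy1, hy2, hy3, hy4⟩ := hb'
      have hyu := (R.sep_bag hy3 ht2 hbt hub).2
      have hp1I : R.I b p1 := by
        by_contra h
        have hyp := (R.sep_bag hy3 ht1 hbt h).2
        exact core_off hs hl hc (hcor y hyp hyu) hy1 hy2
      refine ⟨b, hb, hbz, ?_⟩
      rw [hle]
      have hp0b : ¬ R.I b p0 := fun h => hp0x (R.I_mono (BB_le hb) h)
      refine run_int (R.I b) _ _ _ hp1I ⟨p0, ?_, hp0b⟩ ⟨u, by simp, hub⟩
      have : p0 ∈ s' ++ [p1] := by rw [← he]; simp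
      rcases List.mem_append.1 this with h | h
      · simp [h]
      · simp only [List.mem_singleton] at h
        exact absurd (h ▸ hp1I) hp0b
  have hne : m ≠ p0 := by
    rintro rfl
    obtain ⟨t, ht, hdt⟩ := hmd
    exact hp0x (meet_d hs hd hdz (by rintro rfl; exact hc hm) ht hdt)
  obtain ⟨la, lb, rfl⟩ := List.append_of_mem hp0
  rcases List.mem_append.1 hm with h | h
  · obtain ⟨b, hb, hbz, hI⟩ := key lb.reverse la.reverse (by simpa using hl.reverse)
      (by simp at hc ⊢; tauto) (by simpa using h)
    refine ⟨b, hb, hbz, ?_⟩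
    have := R.IntP_reverse hI
    simpa using this
  · rcases List.mem_cons.1 h with h | h
    · exact absurd h hne
    · exact key la lb hl hc h

theorem CC [Finite W] {l : List V} (hs : R.Stp x z c c' yy) (hl : LLP G l)
    (hc : c ∉ l) {p0 : V} (hp0 : p0 ∈ l) (hp0x : ¬ R.I x p0) (ht : R.touch l x) :
    ∃ b ∈ BB x yy, ¬ b ≤ z ∧ ∃ v ∈ l, R.I b v := by
  obtain ⟨t, hcor, hxt⟩ := ht
  have hno := core_off hs hl hc hcor hxt
  rcases BB_cover hs.hx hxt with h | ⟨b, hb, hbt⟩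
  · exact absurd h hno
  · have hcor' := hcor
    obtain ⟨l1, u, v, l2, rfl, hu, hv⟩ := hcor
    by_cases hbz : b ≤ z
    · obtain ⟨b, hb, hbz, l1', u', s, u'', l2', he, h1, h2, -⟩ :=
        C2 hs hl hc hb hbz hp0 hp0x (m := u) (by simp) ⟨t, hu, hbt⟩
      obtain ⟨w, hw⟩ := List.exists_mem_of_ne_nil _ h1
      exact ⟨b, hb, hbz, w, by rw [he]; simp [hw], h2 w hw⟩
    · refine ⟨b, hb, hbz, ?_⟩
      obtain ⟨y, hy1, hy2, hy3, hy4⟩ := hb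
      by_cases hI : R.I b u
      · exact ⟨u, by simp, hI⟩
      · by_cases hI' : R.I b v
        · exact ⟨v, by simp, hI'⟩
        · exact absurd hy2 (core_off hs hl hc
            ⟨l1, u, v, l2, rfl, (R.sep_bag hy3 hu hbt hI).2, (R.sep_bag hy3 hv hbt hI').2⟩ hy1)

/-- first vertex of `l` lies in `I x`. -/
def HdIn (R : RRep W G) (l : List V) (x : W) : Prop := ∃ v t, l = v :: t ∧ R.I x v

theorem intP_of_mem {l : List V} {b : W} (h1 : ¬ HdIn R l x) (h2 : ¬ HdIn R l.reverse x)
    (hxb : x ≤ b) {v : V} (hv : v ∈ l) (hI : R.I b v) : R.IntP l b := by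
  obtain ⟨la, lb, rfl⟩ := List.append_of_mem hv
  refine run_int (R.I b) _ _ _ hI ?_ ?_
  · rcases la with _ | ⟨a, la⟩
    · exact absurd ⟨v, lb, rfl, R.I_mono hxb hI⟩ h1
    · refine ⟨a, by simp, fun h => h1 ⟨a, _, rfl, R.I_mono hxb h⟩⟩
  · rcases List.eq_nil_or_concat lb with rfl | ⟨l', a, rfl⟩
    · exact absurd ⟨v, la.reverse, by simp, R.I_mono hxb hI⟩ h2
    · refine ⟨a, by simp, fun h => h2 ⟨a, l'.reverse ++ v :: la.reverse, by simp, R.I_mono hxb h⟩⟩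

theorem endP_of_hd [Finite W] {l : List V} (hs : R.Stp x z c c' yy) (hl : LLP G l)
    (hc : c ∉ l) {p0 : V} (hp0 : p0 ∈ l) (hp0x : ¬ R.I x p0) (h : HdIn R l x) :
    ∃ b ∈ BB x yy, R.EndP l b := by
  obtain ⟨v, t, rfl, hI⟩ := h
  have hvc : c ≠ v := by rintro rfl; simp at hc
  have hno : ∀ y, x ≤ y → y ≤ yy → y ∉ R.S v := by
    intro y h1 h2 h3
    have := replace_init (s := []) (mid := [c]) hl
      (by simp [R.adj_bag hvc (hs.bag y h1 h2).1 h3]) (by simp) (by simpa using hc)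
    simp at this
  obtain ⟨e, he⟩ := R.ne v
  rcases BB_cover hs.hx (hI e he) with h | ⟨b, hb, hbe⟩
  · exact absurd he (hno e (hI e he) h)
  · refine ⟨b, hb, ?_⟩
    have hIb : R.I b v := by
      by_contra hn
      obtain ⟨y, hy1, hy2, hy3, hy4⟩ := hb
      exact hno y hy1 hy2 (R.sep_bag hy3 he hbe hn).2
    obtain ⟨s, u, t', h1, h2, h3⟩ := split_first (R.I b) (v :: t)
      ⟨p0, hp0, fun h => hp0x (R.I_mono (BB_le hb) h)⟩
    refine ⟨s, u, t', h1, ?_, h2, h3⟩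
    rintro rfl
    simp only [List.nil_append, List.cons.injEq] at h1
    exact h3 (h1.1 ▸ hIb)

/-- a path touching `x` that leaves `I x` meets the bag of `x` -/
theorem small_bag {l : List V} (hl : LLP G l) {p0 : V} (hp0 : p0 ∈ l)
    (hp0x : ¬ R.I x p0) (ht : R.touch l x) :
    ∃ v ∈ l, x ∈ R.S v := by
  by_contra hno
  push Not at hno
  have hnd : ∀ v ∈ l, (∃ t ∈ R.S v, x ≤ t) → R.I x v := by
    rintro v hv ⟨t, ht, hxt⟩
    by_contra h
    unfold I at h
    push Not at h
    obtain ⟨t', ht', hx'⟩ := h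
    exact hno v hv (R.sep ht hxt ht' hx').1
  have hstep : ∀ u ∈ l, ∀ v ∈ l, G.Adj u v → R.I x u → R.I x v := by
    intro u hu v hv huv hI
    obtain ⟨t, h1, h2⟩ := R.adj_share huv
    exact hnd v hv ⟨t, h2, hI t h1⟩
  have hall : ∀ l : List V, l.IsChain G.Adj → (∀ u ∈ l, ∀ v ∈ l, G.Adj u v → R.I x u → R.I x v) →
      (∃ v ∈ l, R.I x v) → ∀ v ∈ l, R.I x v := by
    intro l
    induction l with
    | nil => simp
    | cons a l ih =>
      intro hc hst hex
      rcases l with _ | ⟨b, l⟩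
      · simpa using hex
      · rw [List.isChain_cons_cons] at hc
        have ih' := ih hc.2 (fun u hu v hv => hst u (List.mem_cons_of_mem _ hu) v (List.mem_cons_of_mem _ hv))
        obtain ⟨v, hv, hI⟩ := hex
        have hb : ∀ v ∈ b :: l, R.I x v := by
          rcases List.mem_cons.1 hv with rfl | hv
          · exact ih' ⟨b, by simp, hst _ (by simp) b (by simp) hc.1 hI⟩
          · exact ih' ⟨v, hv, hI⟩
        intro w hw
        rcases List.mem_cons.1 hw with rfl | hw
        · exact hst b (by simp) _ (by simp) hc.1.symm (hb b (by simp))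
        · exact hb w hw
  obtain ⟨t, ⟨l1, u, v, l2, rfl, hu, hv⟩, hxt⟩ := ht
  exact hp0x (hall _ hl.1.1 hstep ⟨u, by simp, hnd u (by simp) ⟨t, hu, hxt⟩⟩ p0 hp0)

theorem ncard_le_one_bag (hsm : ∀ u v, x ∈ R.S u → x ∈ R.S v → u = v) :
    {v | x ∈ R.S v}.ncard ≤ 1 := by
  rcases Set.eq_empty_or_nonempty {v | x ∈ R.S v} with h | ⟨u, hu⟩
  · rw [h]; simp
  · have : {v | x ∈ R.S v} = {u} := by
      ext v
      exact ⟨fun hv => hsm v u hv hu, fun hv => by rw [hv]; exact hu⟩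
    rw [this]; simp

theorem ncard_ins2 {V : Type} (c c' : V) (A : Set V) {n : ℕ} (h : A.ncard ≤ n) :
    (insert c (insert c' A)).ncard ≤ n + 2 := by
  have h1 := Set.ncard_insert_le c (insert c' A)
  have h2 := Set.ncard_insert_le c' A
  omega

/-- One round for the paths with both ends outside. -/
theorem S1 [Fintype V] [Finite W] (R : RRep W G) {x z : W} (hxz : x ≤ z) :
    ∃ A : Set V, A.ncard ≤ 4 ∧
      ((∀ l, LLP G l → R.touch l x → ¬ HdIn R l x → ¬ HdIn R l.reverse x → ∃ v ∈ A, v ∈ l) ∨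
      ∃ y b, x ≤ y ∧ y ≤ z ∧ y ⋖ b ∧ ¬ b ≤ z ∧
        ∀ l, LLP G l → R.touch l x → ¬ HdIn R l x → ¬ HdIn R l.reverse x → 
          (∀ v ∈ A, v ∉ l) → ∃ v ∈ l, R.I b v) := by
  have hp : ∀ l, R.touch l x → ¬ HdIn R l x → ∃ p0 ∈ l, ¬ R.I x p0 := by
    rintro l ⟨t, ⟨l1, u, v, l2, rfl, -⟩, -⟩ h
    rcases l1 with _ | ⟨a, l1⟩
    · exact ⟨u, by simp, fun h' => h ⟨u, _, rfl, h'⟩⟩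
    · exact ⟨a, by simp, fun h' => h ⟨a, _, rfl, h'⟩⟩
  by_cases h2 : ∃ u v, u ≠ v ∧ x ∈ R.S u ∧ x ∈ R.S v
  · obtain ⟨c, c', yy, h1, h2, h3, h4, h5⟩ := R.setup hxz h2
    have hs : R.Stp x z c c' yy := ⟨h1, h2, h3, h4, h5⟩
    obtain ⟨A, hA, hAA⟩ := R.INT (BB x yy ∩ {b | ¬ b ≤ z}) h1 (fun b hb => BB_par hb.1 hs)
    refine ⟨insert c (insert c' A), ncard_ins2 c c' A hA, ?_⟩
    have hintl : ∀ l, LLP G l → R.touch l x → ¬ HdIn R l x → ¬ HdIn R l.reverse x → c ∉ l →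
        ∃ b ∈ BB x yy ∩ {b | ¬ b ≤ z}, R.IntP l b := by
      intro l hl ht k1 k2 hc
      obtain ⟨p0, hp0, hp0x⟩ := hp l ht k1
      obtain ⟨b, hb, hbz, v, hv, hI⟩ := CC hs hl hc hp0 hp0x ht
      exact ⟨b, ⟨hb, hbz⟩, intP_of_mem k1 k2 (BB_le hb) hv hI⟩
    rcases hAA with hAA | ⟨b, hb, hAA⟩
    · left
      intro l hl ht k1 k2
      by_contra hno
      push Not at hno
      obtain ⟨b, hb, hI⟩ := hintl l hl ht k1 k2 (hno c (by simp))
      exact hAA l hl (hno c (by simp)) (hno c' (by simp)) (fun v hv => hno v (by simp [hv])) b hb hI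
    · right
      obtain ⟨⟨y, y1, y2, y3, y4⟩, hbz⟩ := hb
      refine ⟨y, b, y1, y2.trans h3, y3, hbz, ?_⟩
      intro l hl ht k1 k2 hno
      exact hAA l hl (hno c (by simp)) (hno c' (by simp)) (fun v hv => hno v (by simp [hv]))
        (hintl l hl ht k1 k2 (hno c (by simp)))
  · have hsm : ∀ u v, x ∈ R.S u → x ∈ R.S v → u = v := by
      intro u v hu hv
      by_contra h
      exact h2 ⟨u, v, h, hu, hv⟩
    refine ⟨{v | x ∈ R.S v}, (ncard_le_one_bag hsm).trans (by norm_num), Or.inl ?_⟩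
    intro l hl ht k1 k2
    obtain ⟨p0, hp0, hp0x⟩ := hp l ht k1
    obtain ⟨v, hv, hx⟩ := small_bag hl hp0 hp0x ht
    exact ⟨v, hx, hv⟩

/-- Abstract version of the game. -/
def Win (W : Type) [PartialOrder W] : ℕ → W → Prop
  | 0, _ => False
  | t + 1, x => ∃ z, x ≤ z ∧ ∀ y b, x ≤ y → y ≤ z → y ⋖ b → ¬ b ≤ z → Win W t b

theorem two_le_of_touch {l : List V} (h : R.touch l x) : 2 ≤ l.length := by
  obtain ⟨t, ⟨l1, u, v, l2, rfl, -⟩, -⟩ := h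
  simp; omega

theorem SS [Fintype V] [Finite W] (R : RRep W G) (t : ℕ) : ∀ x : W, Win W t x → 
    ∃ A : Set V, A.ncard ≤ 4 * t ∧ ∀ l, LLP G l → R.touch l x → ¬ HdIn R l x →
      ¬ HdIn R l.reverse x → ∃ v ∈ A, v ∈ l := by
  induction t with
  | zero => intro x h; exact absurd h (by simp [Win])
  | succ t ih =>
    rintro x ⟨z, hxz, hw⟩
    obtain ⟨A, hA, h | ⟨y, b, h1, h2, h3, h4, h5⟩⟩ := S1 R hxz
    · exact ⟨A, by omega, h⟩
    · obtain ⟨A', hA', h'⟩ := ih b (hw y b h1 h2 h3 h4)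
      refine ⟨A ∪ A', (Set.ncard_union_le A A').trans (by omega), ?_⟩
      intro l hl ht k1 k2
      by_contra hno
      push Not at hno
      obtain ⟨v, hv, hI⟩ := h5 l hl ht k1 k2 (fun v hv => hno v (Or.inl hv))
      have hxb : x ≤ b := h1.trans h3.le
      obtain ⟨w, hw, hwl⟩ := h' l hl (R.touch_of_I hl (two_le_of_touch ht) hv hI)
        (fun ⟨v, t, he, hI⟩ => k1 ⟨v, t, he, R.I_mono hxb hI⟩)
        (fun ⟨v, t, he, hI⟩ => k2 ⟨v, t, he, R.I_mono hxb hI⟩)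
      exact hno w (Or.inr hw) hwl

theorem M1 [Fintype V] [Finite W] (R : RRep W G) {x z : W} (hxz : x ≤ z) {t : ℕ}
    (ht : Win W t x) :
    ∃ A : Set V, A.ncard ≤ 4 * t + 3 ∧
      ((∀ l, LLP G l → R.touch l x → (∃ p0 ∈ l, ¬ R.I x p0) → ∃ v ∈ A, v ∈ l) ∨
      ∃ y b, x ≤ y ∧ y ≤ z ∧ y ⋖ b ∧ ¬ b ≤ z ∧
        ∀ l, LLP G l → R.touch l x → (∃ p0 ∈ l, ¬ R.I x p0) → 
          (∀ v ∈ A, v ∉ l) → ∃ v ∈ l, R.I b v) := by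
  have ht1 : 1 ≤ t := by
    rcases t with _ | t
    · exact absurd ht (by simp [Win])
    · omega
  by_cases h2 : ∃ u v, u ≠ v ∧ x ∈ R.S u ∧ x ∈ R.S v
  · obtain ⟨c, c', yy, h1, h2, h3, h4, h5⟩ := R.setup hxz h2
    have hs : R.Stp x z c c' yy := ⟨h1, h2, h3, h4, h5⟩
    obtain ⟨A1, hA1, hE⟩ := R.END (BB x yy) (c := c) (fun b hb => by
      obtain ⟨y, k1, k2, -⟩ := BB_par hb hs
      exact ⟨y, k1, k2⟩)
    obtain ⟨A2, hA2, hS⟩ := SS R t x ht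
    have hbd : (insert c (A1 ∪ A2)).ncard ≤ 4 * t + 3 := by
      have k1 := Set.ncard_insert_le c (A1 ∪ A2)
      have k2 := Set.ncard_union_le A1 A2
      omega
    -- surviving paths have an end piece
    have hend : ∀ l, LLP G l → R.touch l x → (∃ p0 ∈ l, ¬ R.I x p0) →
        (∀ v ∈ insert c (A1 ∪ A2), v ∉ l) → 
        (∃ b ∈ BB x yy, R.EndP l b) ∨ (∃ b ∈ BB x yy, R.EndP l.reverse b) := by
      rintro l hl htc ⟨p0, hp0, hp0x⟩ hno
      by_cases k1 : HdIn R l x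
      · exact Or.inl (endP_of_hd hs hl (hno c (by simp)) hp0 hp0x k1)
      · by_cases k2 : HdIn R l.reverse x
        · exact Or.inr (endP_of_hd hs hl.reverse (by simpa using hno c (by simp))
            (List.mem_reverse.2 hp0) hp0x k2)
        · obtain ⟨v, hv, hvl⟩ := hS l hl htc k1 k2
          exact absurd hvl (hno v (by simp [hv]))
    rcases hE with hE | ⟨b, hb, hE⟩
    · refine ⟨_, hbd, Or.inl ?_⟩
      intro l hl htc hp
      by_contra hno
      push Not at hno
      rcases hend l hl htc hp hno with ⟨b, hb, hbe⟩ | ⟨b, hb, hbe⟩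
      · exact hE l hl (hno c (by simp)) (fun v hv => hno v (by simp [hv])) b hb hbe
      · exact hE l.reverse hl.reverse (by simpa using hno c (by simp))
          (fun v hv => by simpa using hno v (by simp [hv])) b hb hbe
    · have hE' : ∀ l, LLP G l → c ∉ l → (∀ v ∈ A1, v ∉ l) → 
          ((∃ b ∈ BB x yy, R.EndP l b) ∨ (∃ b ∈ BB x yy, R.EndP l.reverse b)) → 
          ∃ v ∈ l, R.I b v := by
        rintro l hl hc hA (h | h)
        · exact hE l hl hc hA h
        · obtain ⟨v, hv, hI⟩ := hE l.reverse hl.reverse (by simpa using hc) (by simpa using hA) h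
          exact ⟨v, by simpa using hv, hI⟩
      by_cases hbz : b ≤ z
      · obtain ⟨A3, hA3, hAA⟩ := R.INT (BB x yy ∩ {b | ¬ b ≤ z}) h1 (fun b hb => BB_par hb.1 hs)
        have hbd' : (insert c (insert c' (A1 ∪ A3))).ncard ≤ 4 * t + 3 := by
          have k2 := Set.ncard_union_le A1 A3
          have := ncard_ins2 c c' (A1 ∪ A3) (n := 3) (by omega)
          omega
        have hintl : ∀ l, LLP G l → R.touch l x → (∃ p0 ∈ l, ¬ R.I x p0) →
            (∀ v ∈ insert c (insert c' (A1 ∪ A3)), v ∉ l) → 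
            ∃ b ∈ BB x yy ∩ {b | ¬ b ≤ z}, R.IntP l b := by
          rintro l hl htc ⟨p0, hp0, hp0x⟩ hno
          have hc := hno c (by simp)
          have fromE : ((∃ b ∈ BB x yy, R.EndP l b) ∨ (∃ b ∈ BB x yy, R.EndP l.reverse b)) →
              ∃ b ∈ BB x yy ∩ {b | ¬ b ≤ z}, R.IntP l b := by
            intro h
            obtain ⟨v, hv, hI⟩ := hE' l hl hc (fun v hv => hno v (by simp [hv])) h
            obtain ⟨e, he⟩ := R.ne v
            obtain ⟨b', k1, k2, k3⟩ := C2 hs hl hc hb hbz hp0 hp0x hv ⟨e, he, hI e he⟩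
            exact ⟨b', ⟨k1, k2⟩, k3⟩
          by_cases k1 : HdIn R l x
          · exact fromE (Or.inl (endP_of_hd hs hl hc hp0 hp0x k1))
          · by_cases k2 : HdIn R l.reverse x
            · exact fromE (Or.inr (endP_of_hd hs hl.reverse (by simpa using hc)
                (List.mem_reverse.2 hp0) hp0x k2))
            · obtain ⟨b', hb', hbz', v, hv, hI⟩ := CC hs hl hc hp0 hp0x htc
              exact ⟨b', ⟨hb', hbz'⟩, intP_of_mem k1 k2 (BB_le hb') hv hI⟩
        refine ⟨_, hbd', ?_⟩
        rcases hAA with hAA | ⟨b', hb', hAA⟩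
        · left
          intro l hl htc hp
          by_contra hno
          push Not at hno
          obtain ⟨b', hb', hI⟩ := hintl l hl htc hp hno
          exact hAA l hl (hno c (by simp)) (hno c' (by simp))
            (fun v hv => hno v (by simp [hv])) b' hb' hI
        · right
          obtain ⟨⟨y, y1, y2, y3, y4⟩, hbz'⟩ := hb'
          refine ⟨y, b', y1, y2.trans h3, y3, hbz', ?_⟩
          intro l hl htc hp hno
          exact hAA l hl (hno c (by simp)) (hno c' (by simp))
            (fun v hv => hno v (by simp [hv])) (hintl l hl htc hp hno)
      · refine ⟨_, hbd, Or.inr ?_⟩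
        obtain ⟨y, y1, y2, y3, y4⟩ := hb
        refine ⟨y, b, y1, y2.trans h3, y3, hbz, ?_⟩
        intro l hl htc hp hno
        exact hE' l hl (hno c (by simp)) (fun v hv => hno v (by simp [hv])) (hend l hl htc hp hno)
  · have hsm : ∀ u v, x ∈ R.S u → x ∈ R.S v → u = v := by
      intro u v hu hv
      by_contra h
      exact h2 ⟨u, v, h, hu, hv⟩
    refine ⟨{v | x ∈ R.S v}, (ncard_le_one_bag hsm).trans (by omega), Or.inl ?_⟩
    rintro l hl ht ⟨p0, hp0, hp0x⟩
    obtain ⟨v, hv, hx⟩ := small_bag hl hp0 hp0x ht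
    exact ⟨v, hx, hv⟩

end RRep

/-! ### Localizing all longest paths around a clique -/

theorem chain_const {V α : Type} {G : SimpleGraph V} {K : Set V} {f : V → α}
    (hf : ∀ u v, G.Adj u v → u ∉ K → v ∉ K → f u = f v) (l : List V) (hc : l.IsChain G.Adj)
    (hK : ∀ w ∈ l, w ∉ K) : ∀ u ∈ l, ∀ v ∈ l, f u = f v := by
  induction l with
  | nil => simp
  | cons a l ih =>
    rcases l with _ | ⟨b, l⟩
    · simp
    · rw [List.isChain_cons_cons] at hc
      have ih' := ih hc.2 (fun w hw => hK w (List.mem_cons_of_mem _ hw))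
      have hab := hf a b hc.1 (hK a (by simp)) (hK b (by simp))
      have h1 : ∀ u ∈ a :: b :: l, f u = f b := by
        intro u hu
        rcases List.mem_cons.1 hu with rfl | hu
        · exact hab
        · exact ih' u hu b (by simp)
      intro u hu v hv
      rw [h1 u hu, h1 v hv]

theorem conn_list {V : Type} {G : SimpleGraph V} (hG : G.Connected) (u v : V) :
    ∃ l : List V, LIsP G (u :: l) ∧ v ∈ u :: l := by
  classical
  obtain ⟨p, hp⟩ := (hG.preconnected u v).exists_isPath
  refine ⟨p.support.tail, ?_, ?_⟩
  · rw [Walk.cons_tail_support]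
    exact ⟨p.isChain_adj_support, hp.support_nodup⟩
  · rw [Walk.cons_tail_support]
    exact p.end_mem_support

theorem nodup_aux {V : Type} {P M : List V} {k u : V} (h1 : (P ++ [k]).Nodup)
    (h2 : (u :: M).Nodup) (h3 : ∀ e ∈ P, e ∉ M) (h4 : k ∉ M) (h5 : u ∉ P) (h6 : k ≠ u) :
    (P ++ k :: u :: M).Nodup := by
  grind

theorem G1 {V α : Type} [Fintype V] {G : SimpleGraph V} (hG : G.Connected) (K : Set V)
    (hK : ∀ u ∈ K, ∀ v ∈ K, u ≠ v → G.Adj u v) (f : V → α)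
    (hf : ∀ u v, G.Adj u v → u ∉ K → v ∉ K → f u = f v) :
    ∃ A : Set V, A.ncard ≤ 1 ∧ ((∀ l, LLP G l → ∃ v ∈ A, v ∈ l) ∨
      ∃ a, ∀ l, LLP G l → (∀ v ∈ A, v ∉ l) → ∃ v ∈ l, v ∉ K ∧ f v = a) := by
  classical
  let p : List V → Prop := fun M => ∃ u ∈ K, LIsP G (M ++ [u]) ∧ ∀ w ∈ M, w ∉ K
  by_cases hKe : K = ∅
  · subst hKe
    obtain ⟨v0⟩ := hG.nonempty
    refine ⟨∅, by simp, Or.inr ⟨f v0, ?_⟩⟩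
    intro l hl _
    obtain ⟨v, hv⟩ := List.exists_mem_of_ne_nil _ (hl.ne_nil v0)
    refine ⟨v, hv, by simp, ?_⟩
    obtain ⟨m, hm, hm'⟩ := conn_list hG v v0
    exact chain_const hf _ hm.1 (by simp) v (by simp) v0 hm'
  · obtain ⟨k0, hk0⟩ := Set.nonempty_iff_ne_empty.2 hKe
    obtain ⟨M, ⟨u, hu, hM, hMK⟩, hmax⟩ := lmax p (by
      rintro l ⟨u, hu, hN, hN0⟩
      have := hN.2
      grind) ⟨[], k0, hk0, ⟨by simp, by simp⟩, by simp⟩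
    have hMc : M.IsChain G.Adj := by
      have := hM.1
      rw [List.isChain_append] at this
      exact this.1
    have hMn : M.Nodup ∧ u ∉ M := by
      have := hM.2
      grind
    -- a path avoiding u which meets K contains a vertex of M
    have hcase1 : ∀ l, LLP G l → u ∉ l → (∃ k ∈ l, k ∈ K) → ∃ v ∈ l, v ∈ M := by
      intro l hl hul hk
      by_contra hno
      push Not at hno
      obtain ⟨s, k, t, rfl, hs, hkK⟩ := split_first (fun w => w ∉ K) l
        (by simpa using hk)
      simp only [not_not] at hkK
      have huk : u ≠ k := by rintro rfl; simp at hul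
      have hsM : s.length ≤ M.length := hmax s ⟨k, hkK, ⟨by
        have := hl.1.1
        rw [List.isChain_split] at this
        exact this.1, by
        have := hl.1.2
        grind⟩, hs⟩
      have := replace_init (mid := M ++ [u]) hl (by
          have : (M ++ u :: k :: []).IsChain G.Adj := by
            rw [List.isChain_append_cons_cons]
            exact ⟨hM.1, hK u hu k hkK huk, by simp⟩
          simpa using this) hM.2 (by
          intro w hw
          rcases List.mem_append.1 hw with h | h
          · exact fun h' => hno w h' h
          · simp only [List.mem_singleton] at h
            exact h ▸ hul)
      simp at this
      omega
    -- a path avoiding K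
    have hcase2 : ∀ l, LLP G l → (∀ k ∈ l, k ∉ K) → ∃ m0 ∈ M, ∃ v ∈ l, f v = f m0 := by
      intro l hl hlK
      by_contra hno
      push Not at hno
      obtain ⟨w0, hw0⟩ := List.exists_mem_of_ne_nil _ (hl.ne_nil k0)
      obtain ⟨m, hm, hm'⟩ := conn_list hG w0 k0
      obtain ⟨s0, k, t0, he, hs0, hk⟩ := split_first (fun v => v ∉ K) (w0 :: m)
        ⟨k0, hm', by simpa using hk0⟩
      simp only [not_not] at hk
      have hw0s : w0 ∈ s0 := by
        rcases s0 with _ | ⟨e, s0⟩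
        · simp only [List.nil_append, List.cons.injEq] at he
          exact absurd (he.1 ▸ hk) (hlK w0 hw0)
        · simp only [List.cons_append, List.cons.injEq] at he
          simp [he.1]
      have hs0P : LIsP G (s0 ++ [k]) := by
        rw [he] at hm
        refine ⟨?_, ?_⟩
        · have := hm.1
          rw [List.isChain_split] at this
          exact this.1
        · have := hm.2
          grind
      obtain ⟨p1, w, s, rfl, hsl, hw⟩ := split_last (fun v => v ∉ l) s0
        ⟨w0, hw0s, by simpa using hw0⟩
      simp only [not_not] at hw
      have hsc : ((w :: s) ++ [k]).IsChain G.Adj := by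
        have := hs0P.1
        rw [List.append_assoc] at this
        rw [List.isChain_append] at this
        exact this.2.1
      have hsn : ((w :: s) ++ [k]).Nodup := by
        have := hs0P.2
        grind
      have hsK : ∀ e ∈ w :: s, e ∉ K := fun e h => hs0 e (by simp at h ⊢; tauto)
      have key : ∀ la lb : List V, LLP G (la ++ w :: lb) → (∀ e ∈ la ++ w :: lb, e ∈ l) →
          lb.length ≤ la.length → False := by
        intro la lb hl' hll hlen
        have hP1 : LIsP G ((la ++ w :: s) ++ [k]) := by
          constructor
          · rw [List.append_assoc, List.cons_append, List.isChain_split]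
            have := hl'.1.1
            rw [List.isChain_split] at this
            exact ⟨this.1, hsc⟩
          · have h1 := hl'.1.2
            have h2 : k ∉ la := fun h => hlK k (hll k (by simp [h])) hk
            have h3 : ∀ e ∈ la, e ∉ s := fun e h h' => hsl e h' (hll e (by simp [h]))
            grind
        have hP1K : ∀ e ∈ la ++ w :: s, e ∉ K := by
          intro e h
          rcases List.mem_append.1 h with h | h
          · exact hlK e (hll e (by simp [h]))
          · exact hsK e h
        have hlenM : (la ++ w :: s).length ≤ M.length := hmax _ ⟨k, hk, hP1, hP1K⟩
        have hdis : ∀ e ∈ la ++ w :: s, e ∉ M := by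
          intro e h h'
          have hc : (la ++ w :: s).IsChain G.Adj := by
            have := hP1.1
            rw [List.isChain_append] at this
            exact this.1
          exact hno e h' w hw (chain_const hf _ hc hP1K w (by simp) e h)
        have hMr := hM.reverse
        rw [List.reverse_append, List.reverse_singleton, List.singleton_append] at hMr
        have hkM : k ∉ M := fun h => hMK k h hk
        have huP : u ∉ la ++ w :: s := fun h => hP1K u h hu
        by_cases huk : k = u
        · subst huk
          have := hl'.2 ((la ++ w :: s) ++ k :: M.reverse) ⟨by
            rw [List.isChain_split]
            exact ⟨hP1.1, hMr.1⟩, by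
            have h1 := hP1.2
            have h2 := hMr.2
            grind⟩
          simp at this hlenM
          omega
        · have := hl'.2 ((la ++ w :: s) ++ k :: u :: M.reverse) ⟨by
            rw [List.isChain_append_cons_cons]
            exact ⟨hP1.1, hK k hk u hu huk, hMr.1⟩,
            nodup_aux hP1.2 hMr.2 (by simpa using hdis) (by simpa using hkM) huP huk⟩
          simp at this hlenM
          omega
      obtain ⟨la, lb, rfl⟩ := List.append_of_mem hw
      rcases le_total lb.length la.length with h | h
      · exact key la lb hl (fun e h => h) h
      · exact key lb.reverse la.reverse (by simpa using hl.reverse)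
          (fun e h => by simp at h ⊢; tauto) (by simpa using h)
    by_cases hMe : M = []
    · refine ⟨{u}, by simp, Or.inl ?_⟩
      intro l hl
      by_contra hno
      simp only [Set.mem_singleton_iff, exists_eq_left] at hno
      by_cases hk : ∃ k ∈ l, k ∈ K
      · obtain ⟨v, -, hv⟩ := hcase1 l hl hno hk
        simp [hMe] at hv
      · push Not at hk
        obtain ⟨v, hv, -⟩ := hcase2 l hl hk
        simp [hMe] at hv
    · obtain ⟨m0, hm0⟩ := List.exists_mem_of_ne_nil _ hMe
      refine ⟨{u}, by simp, Or.inr ⟨f m0, ?_⟩⟩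
      intro l hl hno
      by_cases hk : ∃ k ∈ l, k ∈ K
      · obtain ⟨v, hv, hvM⟩ := hcase1 l hl (hno u (by simp)) hk
        exact ⟨v, hv, hMK v hvM, chain_const hf M hMc hMK v hvM m0 hm0⟩
      · push Not at hk
        obtain ⟨m1, hm1, v, hv, hfv⟩ := hcase2 l hl hk
        exact ⟨v, hv, hk v hv, hfv.trans (chain_const hf M hMc hMK m1 hm1 m0 hm0)⟩

namespace RRep
variable {V W : Type} [PartialOrder W] {G : SimpleGraph V}

theorem G1' [Fintype V] [Finite W] (R : RRep W G) (hG : G.Connected) (y : W) :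
    ∃ A : Set V, A.ncard ≤ 1 ∧ ((∀ l, LLP G l → ∃ v ∈ A, v ∈ l) ∨
      (∀ l, LLP G l → (∀ v ∈ A, v ∉ l) → ∃ v ∈ l, ¬ R.I y v) ∨
      ∃ b, y ⋖ b ∧ ∀ l, LLP G l → (∀ v ∈ A, v ∉ l) → ∃ v ∈ l, R.I b v) := by
  have half : ∀ u v, G.Adj u v → v ∉ {v | y ∈ R.S v} → 
      {b | y ⋖ b ∧ R.I b u} ⊆ {b | y ⋖ b ∧ R.I b v} := by
    rintro u v huv hv b ⟨h1, h2⟩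
    refine ⟨h1, ?_⟩
    by_contra h3
    exact hv (R.bag_of_adj h1 huv.symm h2 h3)
  obtain ⟨A, hA, h | ⟨a, h⟩⟩ := G1 hG {v | y ∈ R.S v}
    (fun u hu v hv huv => R.adj_bag huv hu hv) (fun v => {b | y ⋖ b ∧ R.I b v})
    (fun u v huv hu hv => Set.Subset.antisymm (half u v huv hv) (half v u huv.symm hu))
  · exact ⟨A, hA, Or.inl h⟩
  · refine ⟨A, hA, Or.inr ?_⟩
    rcases Set.eq_empty_or_nonempty a with rfl | ⟨b, hb⟩
    · left
      intro l hl hno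
      obtain ⟨v, hv, hvK, hfv⟩ := h l hl hno
      refine ⟨v, hv, fun hI => ?_⟩
      obtain ⟨t, ht⟩ := R.ne v
      have hyt : y < t := lt_of_le_of_ne (hI t ht) (by rintro rfl; exact hvK ht)
      obtain ⟨b, hb, hbt⟩ := exists_covBy_le_of_lt hyt
      have : b ∈ {b | y ⋖ b ∧ R.I b v} := by
        refine ⟨hb, ?_⟩
        by_contra hn
        exact hvK (R.sep_bag hb ht hbt hn).2
      rw [hfv] at this
      exact this
    · by_cases hex : ∃ v, {b | y ⋖ b ∧ R.I b v} = a
      · right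
        obtain ⟨v0, hv0⟩ := hex
        refine ⟨b, (hv0 ▸ hb).1, ?_⟩
        intro l hl hno
        obtain ⟨v, hv, -, hfv⟩ := h l hl hno
        exact ⟨v, hv, (hfv ▸ hb).2⟩
      · left
        intro l hl hno
        obtain ⟨v, hv, -, hfv⟩ := h l hl hno
        exact absurd ⟨v, hfv⟩ hex

theorem Win_mono [Finite W] (t : ℕ) : (∀ x : W, Win W t x → Win W (t + 1) x) ∧
    ∀ x y : W, x ≤ y → Win W t x → Win W t y := by
  induction t with
  | zero => exact ⟨fun x h => absurd h (by simp [Win]), fun x y _ h => absurd h (by simp [Win])⟩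
  | succ t ih =>
    refine ⟨?_, ?_⟩
    · rintro x ⟨z, hxz, h⟩
      exact ⟨z, hxz, fun y b h1 h2 h3 h4 => ih.1 b (h y b h1 h2 h3 h4)⟩
    · rintro x y hxy ⟨z, hxz, h⟩
      by_cases hyz : y ≤ z
      · exact ⟨z, hyz, fun y' b h1 h2 h3 h4 => h y' b (hxy.trans h1) h2 h3 h4⟩
      · rcases BB_cover (yy := z) hxz hxy with h' | ⟨b, ⟨y', h1, h2, h3, h4⟩, hb⟩
        · exact absurd h' hyz
        · exact ih.1 y (ih.2 b y hb (h y' b h1 h2 h3 h4))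

theorem main_abs [Fintype V] [Finite W] (R : RRep W G) (hG : G.Connected) {x0 z : W} {t : ℕ}
    (ht : Win W t x0) (F : Set (List V)) (hF : ∀ l ∈ F, LLP G l) (hF0 : ∀ l ∈ F, R.touch l x0) :
    ∀ x, x0 ≤ x → x ≤ z → ∀ A0 : Set V, A0.ncard ≤ 1 → 
      (∀ l ∈ F, (∀ v ∈ A0, v ∉ l) → R.touch l x) →
    ∃ A : Set V, A.ncard ≤ 4 * t + 5 ∧ ((∀ l ∈ F, ∃ v ∈ A, v ∈ l) ∨
      ∃ y b, x0 ≤ y ∧ y ≤ z ∧ y ⋖ b ∧ ¬ b ≤ z ∧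
        ∀ l ∈ F, (∀ v ∈ A, v ∉ l) → ∃ v ∈ l, R.I b v) := by
  intro x
  induction x using WellFoundedGT.induction with
  | ind x ih =>
    intro hx0 hxz A0 hA0 hT
    obtain ⟨A1, hA1, h | h | ⟨b, hb, h⟩⟩ := R.G1' hG x
    · exact ⟨A1, by omega, Or.inl fun l hl => h l (hF l hl)⟩
    · obtain ⟨A2, hA2, hM⟩ := M1 R hxz ((Win_mono t).2 x0 x hx0 ht)
      refine ⟨(A0 ∪ A1) ∪ A2, ?_, ?_⟩
      · have k1 := Set.ncard_union_le (A0 ∪ A1) A2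
        have k2 := Set.ncard_union_le A0 A1
        omega
      · rcases hM with hM | ⟨y, b, h1, h2, h3, h4, h5⟩
        · left
          intro l hl
          by_contra hno
          push Not at hno
          obtain ⟨v, hv, hvl⟩ := hM l (hF l hl) (hT l hl (fun v hv => hno v (by simp [hv])))
            (h l (hF l hl) (fun v hv => hno v (by simp [hv])))
          exact hno v (by simp [hv]) hvl
        · right
          refine ⟨y, b, hx0.trans h1, h2, h3, h4, ?_⟩
          intro l hl hno
          exact h5 l (hF l hl) (hT l hl (fun v hv => hno v (by simp [hv])))
            (h l (hF l hl) (fun v hv => hno v (by simp [hv])))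
            (fun v hv => hno v (by simp [hv]))
    · by_cases hbz : b ≤ z
      · refine ih b hb.lt (hx0.trans hb.le) hbz A1 hA1 ?_
        intro l hl hno
        obtain ⟨v, hv, hI⟩ := h l (hF l hl) hno
        exact R.touch_of_I (hF l hl) (two_le_of_touch (hF0 l hl)) hv hI
      · exact ⟨A1, by omega, Or.inr ⟨x, b, hx0, hxz, hb, hbz, fun l hl => h l (hF l hl)⟩⟩

end RRep

/-! ### The tree order -/

section TreeOrder
variable {W : Type} {T : SimpleGraph W} {r : W}

theorem mem_path_iff (hT : T.IsTree) {x w : W} (p : T.Walk r w) (hp : p.IsPath) :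
    x ∈ p.support ↔ w ∈ rootedSubtree T r x := by
  constructor
  · intro h q hq
    have := hT.isAcyclic.path_unique ⟨p, hp⟩ ⟨q, hq⟩
    have h2 : p = q := congrArg Subtype.val this
    exact h2 ▸ h
  · intro h
    exact h p hp

theorem exists_pth (hT : T.IsTree) (w : W) : ∃ p : T.Walk r w, p.IsPath :=
  (hT.connected.preconnected r w).exists_isPath

theorem tle_refl (w : W) : w ∈ rootedSubtree T r w := fun p _ => p.end_mem_support

theorem tle_trans {x y w : W} (h1 : y ∈ rootedSubtree T r x) (h2 : w ∈ rootedSubtree T r y) :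
    w ∈ rootedSubtree T r x := by
  classical
  intro p hp
  have hy := h2 p hp
  exact p.support_takeUntil_subset_support hy (h1 _ (hp.takeUntil hy))

theorem tle_antisymm (hT : T.IsTree) {x y : W} (h1 : y ∈ rootedSubtree T r x)
    (h2 : x ∈ rootedSubtree T r y) : x = y := by
  classical
  by_contra hne
  obtain ⟨p, hp⟩ := exists_pth (r := r) hT y
  have hx := h1 p hp
  have hy := h2 _ (hp.takeUntil hx)
  have h3 := hT.isAcyclic.path_unique ⟨p, hp⟩ ⟨_, (hp.takeUntil hx).takeUntil hy⟩
  have h4 : p.length = ((p.takeUntil x hx).takeUntil y hy).length := by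
    have := congrArg Subtype.val h3
    exact congrArg Walk.length this
  have h5 := Walk.length_takeUntil_le_length (p.takeUntil x hx) hy
  have h6 := Walk.length_takeUntil_lt_length hx hne
  omega

theorem tle_chain (hT : T.IsTree) {x y w : W} (h1 : w ∈ rootedSubtree T r x)
    (h2 : w ∈ rootedSubtree T r y) : y ∈ rootedSubtree T r x ∨ x ∈ rootedSubtree T r y := by
  classical
  obtain ⟨p, hp⟩ := exists_pth (r := r) hT w
  have key : ∀ i j, i ≤ j → j ≤ p.length → p.getVert j ∈ rootedSubtree T r (p.getVert i) := by
    intro i j hij hj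
    rw [← mem_path_iff hT _ (hp.take j)]
    rw [Walk.mem_support_iff_exists_getVert]
    refine ⟨i, ?_, ?_⟩
    · rw [Walk.take_getVert]; congr 1; omega
    · rw [Walk.take_length]; omega
  obtain ⟨i, rfl, hi⟩ := Walk.mem_support_iff_exists_getVert.1 (h1 p hp)
  obtain ⟨j, rfl, hj⟩ := Walk.mem_support_iff_exists_getVert.1 (h2 p hp)
  rcases le_total i j with h | h
  · exact Or.inl (key i j h hj)
  · exact Or.inr (key j i h hi)

/-- The order of a rooted tree. -/
@[reducible] def tOrder (hT : T.IsTree) (r : W) : PartialOrder W where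
  le x w := w ∈ rootedSubtree T r x
  le_refl := tle_refl
  le_trans _ _ _ := tle_trans
  le_antisymm _ _ := tle_antisymm hT

theorem adj_cmp (hT : T.IsTree) {a b : W} (h : T.Adj a b) :
    b ∈ rootedSubtree T r a ∨ a ∈ rootedSubtree T r b := by
  obtain ⟨p, hp⟩ := exists_pth (r := r) hT a
  by_cases hb : b ∈ p.support
  · exact Or.inr ((mem_path_iff hT p hp).1 hb)
  · left
    rw [← mem_path_iff hT (p.concat h) (hp.concat hb h)]
    rw [Walk.support_concat]
    simp

theorem tpar (hT : T.IsTree) {y b u : W} (h : T.Adj y b) (hyb : b ∈ rootedSubtree T r y)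
    (hu : b ∈ rootedSubtree T r u) : u = b ∨ y ∈ rootedSubtree T r u := by
  obtain ⟨p, hp⟩ := exists_pth (r := r) hT y
  have hb : b ∉ p.support := by
    intro hb
    exact h.ne (tle_antisymm hT hyb ((mem_path_iff hT p hp).1 hb))
  have := (mem_path_iff hT (p.concat h) (hp.concat hb h)).2 hu
  rw [Walk.support_concat] at this
  simp at this
  rcases this with h | h
  · exact Or.inr ((mem_path_iff hT p hp).1 h)
  · exact Or.inl h

theorem cov_of_adj (hT : T.IsTree) {y b : W} (h : T.Adj y b) (hyb : b ∈ rootedSubtree T r y) :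
    letI := tOrder hT r; y ⋖ b := by
  letI := tOrder hT r
  refine ⟨lt_of_le_of_ne hyb h.ne, ?_⟩
  intro u h1 h2
  rcases tpar hT h hyb h2.le with h3 | h3
  · exact h2.ne h3
  · exact h1.not_ge h3

theorem adj_of_cov (hT : T.IsTree) {y b : W} (h : letI := tOrder hT r; y ⋖ b) : T.Adj y b := by
  letI := tOrder hT r
  obtain ⟨p, hp⟩ := exists_pth (r := r) hT b
  have hy : y ∈ p.support := h.le p hp
  have hnil : ¬ p.Nil := by
    intro hn
    have h1 := Walk.nil_iff_support_eq.1 hn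
    have h2 := hn.eq
    rw [h1] at hy
    simp at hy
    exact h.lt.ne (hy.trans h2)
  have ha := p.adj_penultimate hnil
  have hle : b ∈ rootedSubtree T r p.penultimate :=
    (mem_path_iff hT p hp).1 (Walk.getVert_mem_support _ _)
  rcases tpar hT ha hle h.le with h3 | h3
  · exact absurd h3 h.lt.ne
  · have : y = p.penultimate := by
      by_contra hne
      exact h.2 (lt_of_le_of_ne h3 hne) (lt_of_le_of_ne hle ha.ne)
    exact this ▸ ha

theorem crossing (hT : T.IsTree) {a a' b : W} (h : T.Adj a a') (h1 : a ∈ rootedSubtree T r b)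
    (h2 : a' ∉ rootedSubtree T r b) : a = b ∧ b ∈ rootedSubtree T r a' := by
  rcases adj_cmp (r := r) hT h with h3 | h3
  · exact absurd (tle_trans h1 h3) h2
  · rcases tpar hT h.symm h3 h1 with h4 | h4
    · exact ⟨h4.symm, h4 ▸ h3⟩
    · exact absurd h4 h2

theorem tree_sep (hT : T.IsTree) {S : Set W} (hS : (T.induce S).Connected) {b s t : W}
    (hs : s ∈ S) (hbs : s ∈ rootedSubtree T r b) (ht : t ∈ S) (hbt : t ∉ rootedSubtree T r b) :
    b ∈ S ∧ ∃ y ∈ S, letI := tOrder hT r; y ⋖ b := by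
  obtain ⟨p⟩ := hS.preconnected ⟨s, hs⟩ ⟨t, ht⟩
  obtain ⟨d, -, h1, h2⟩ := p.exists_boundary_dart {w | w.1 ∈ rootedSubtree T r b} hbs hbt
  have hadj : T.Adj d.fst.1 d.snd.1 := d.adj
  obtain ⟨h3, h4⟩ := crossing hT hadj h1 h2
  refine ⟨h3 ▸ d.fst.2, d.snd.1, d.snd.2, cov_of_adj hT (h3 ▸ hadj.symm) h4⟩

theorem support_iff (hT : T.IsTree) {x z : W} (hxz : z ∈ rootedSubtree T r x) (q : T.Walk x z)
    (hq : q.IsPath) (hqX : ∀ w ∈ q.support, w ∈ rootedSubtree T r x) (w : W) :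
    w ∈ q.support ↔ w ∈ rootedSubtree T r x ∧ z ∈ rootedSubtree T r w := by
  classical
  obtain ⟨p, hp⟩ := exists_pth (r := r) hT z
  have hx := hxz p hp
  have hq' : q = p.dropUntil x hx := by
    have := hT.isAcyclic.path_unique ⟨q, hq⟩ ⟨_, hp.dropUntil hx⟩
    exact congrArg Subtype.val this
  constructor
  · intro h
    refine ⟨hqX w h, (mem_path_iff hT p hp).1 ?_⟩
    rw [hq'] at h
    exact p.support_dropUntil_subset_support hx h
  · rintro ⟨h1, h2⟩
    have h3 := h2 p hp
    rw [← p.take_spec hx, Walk.mem_support_append_iff] at h3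
    rcases h3 with h3 | h3
    · have := (mem_path_iff hT _ (hp.takeUntil hx)).1 h3
      rw [tle_antisymm hT this h1]
      exact q.start_mem_support
    · rw [hq']; exact h3

theorem desc_connected [Finite W] (hT : T.IsTree) (b : W) :
    (T.induce (rootedSubtree T r b)).Connected := by
  letI := tOrder hT r
  have key : ∀ w : W, ∀ hw : w ∈ rootedSubtree T r b,
      (T.induce (rootedSubtree T r b)).Reachable ⟨b, tle_refl b⟩ ⟨w, hw⟩ := by
    intro w
    induction w using WellFoundedLT.induction with
    | ind w ih =>
      intro hw
      by_cases h : b = w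
      · subst h; exact Reachable.refl _
      · have hbw : b < w := lt_of_le_of_ne hw h
        obtain ⟨y, hy, hyw⟩ := exists_le_covBy_of_lt hbw
        have ha : T.Adj y w := adj_of_cov (r := r) hT hyw
        refine (ih y hyw.lt hy).trans (Adj.reachable ?_)
        exact ha
  rw [connected_iff]
  refine ⟨fun u v => (key u.1 u.2).symm.trans (key v.1 v.2), ⟨⟨b, tle_refl b⟩⟩⟩

theorem desc_comp [Finite W] (hT : T.IsTree) {x z y b : W} {Q : Set W}
    (hQ : ∀ w, w ∈ Q ↔ w ∈ rootedSubtree T r x ∧ z ∈ rootedSubtree T r w)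
    (hxy : y ∈ rootedSubtree T r x) (hyz : z ∈ rootedSubtree T r y)
    (hyb : letI := tOrder hT r; y ⋖ b) (hbz : z ∉ rootedSubtree T r b) :
    IsCompOf T (rootedSubtree T r x \ Q) (rootedSubtree T r b) := by
  letI := tOrder hT r
  refine ⟨⟨b, tle_refl b⟩, ?_, desc_connected hT b, ?_⟩
  · intro w hw
    refine ⟨tle_trans hxy (tle_trans hyb.le hw), fun h => hbz (tle_trans hw ((hQ w).1 h).2)⟩
  · intro a c ha hc hac
    by_contra hcb
    obtain ⟨rfl, h2⟩ := crossing hT hac ha hcb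
    have hcov := cov_of_adj hT hac.symm h2
    have hcy : c ≤ y := by
      rcases tpar hT (adj_of_cov (r := r) hT hyb) hyb.le h2 with h | h
      · exact absurd h hac.symm.ne
      · exact h
    exact hc.2 ((hQ c).2 ⟨hc.1, tle_trans hcy hyz⟩)

theorem comp_sub {s C D : Set W} (hC : IsCompOf T s C) (hD : IsCompOf T s D) {v : W}
    (hvC : v ∈ C) (hvD : v ∈ D) : C ⊆ D := by
  intro w hw
  by_contra hwD
  obtain ⟨p⟩ := hC.2.2.1.preconnected ⟨v, hvC⟩ ⟨w, hw⟩
  obtain ⟨d, -, h1, h2⟩ := p.exists_boundary_dart {w | w.1 ∈ D} hvD hwD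
  have hadj : T.Adj d.fst.1 d.snd.1 := d.adj
  exact h2 (hD.2.2.2 h1 (hC.2.1 d.snd.2) hadj)

theorem comp_eq [Finite W] (hT : T.IsTree) {x z x' u : W} {Q X' : Set W}
    (hQ : ∀ w, w ∈ Q ↔ w ∈ rootedSubtree T r x ∧ z ∈ rootedSubtree T r w)
    (hX' : IsCompOf T (rootedSubtree T r x \ Q) X') (hx' : x' ∈ X') (hu : u ∈ Q)
    (ha : T.Adj u x') :
    X' = rootedSubtree T r x' ∧ x' ∈ rootedSubtree T r u := by
  have hx's := hX'.2.1 hx'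
  have hz : z ∉ rootedSubtree T r x' := fun h => hx's.2 ((hQ _).2 ⟨hx's.1, h⟩)
  have hux : x' ∈ rootedSubtree T r u := by
    rcases adj_cmp (r := r) hT ha with h | h
    · exact h
    · exact absurd (tle_trans h ((hQ u).1 hu).2) hz
  have hD := desc_comp hT hQ ((hQ u).1 hu).1 ((hQ u).1 hu).2 (cov_of_adj hT ha hux) hz
  exact ⟨Set.Subset.antisymm (comp_sub hX' hD hx' (tle_refl x'))
    (comp_sub hD hX' (tle_refl x') hx'), hux⟩

theorem cutterWins_exists [Finite W] (hT : T.IsTree) (n : ℕ) : ∀ x : W,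
    (rootedSubtree T r x).ncard ≤ n → cutterWins T n (rootedSubtree T r x) x := by
  induction n with
  | zero =>
    intro x h
    have : rootedSubtree T r x = ∅ := by
      rw [← Set.ncard_eq_zero (Set.toFinite _)]; omega
    have h2 := tle_refl (T := T) (r := r) x
    rw [this] at h2
    exact absurd h2 (by simp)
  | succ n ih =>
    intro x h
    refine ⟨x, tle_refl x, Walk.nil, by simp, ?_, Or.inr ?_⟩
    · intro w hw
      simp at hw
      rw [hw]; exact tle_refl x
    · rintro X' x' hX' hx' ⟨u, hu, ha⟩
      have hu' : u = x := by simpa using hu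
      subst hu'
      obtain ⟨rfl, hux⟩ := comp_eq (z := u) hT (fun w => by
        constructor
        · intro hw
          have : w = u := by simpa using hw
          rw [this]; exact ⟨tle_refl _, tle_refl _⟩
        · rintro ⟨h1, h2⟩
          have := tle_antisymm hT h1 h2
          simp [this]) hX' hx' hu ha
      apply ih
      have : (rootedSubtree T r x').ncard < (rootedSubtree T r u).ncard := by
        refine Set.ncard_lt_ncard ?_ (Set.toFinite _)
        rw [Set.ssubset_iff_of_subset (fun w hw => tle_trans hux hw)]
        exact ⟨u, tle_refl u, fun h => ha.ne (tle_antisymm hT hux h)⟩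
      omega

theorem win_of_cutterWins [Finite W] (hT : T.IsTree) (t : ℕ) : ∀ x : W,
    cutterWins T t (rootedSubtree T r x) x → 
    letI := tOrder hT r; RRep.Win W t x := by
  letI := tOrder hT r
  induction t with
  | zero => intro x h; exact absurd h (by simp [cutterWins])
  | succ t ih =>
    rintro x ⟨z, hz, p, hp, hpX, h⟩
    refine ⟨z, hz, ?_⟩
    intro y b hxy hyz hyb hbz
    have hQ := support_iff hT hz p hp hpX
    rcases h with h | h
    · have hb : b ∈ {w | w ∈ p.support} := by
        rw [← h]; exact le_trans hxy hyb.le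
      exact absurd ((hQ b).1 hb).2 hbz
    · refine ih b (h _ b (desc_comp hT hQ hxy hyz hyb hbz) (tle_refl b) ⟨y, ?_, ?_⟩)
      · exact (hQ y).2 ⟨hxy, hyz⟩
      · exact adj_of_cov (r := r) hT hyb

end TreeOrder

/-! ### Translation from walks to lists -/

theorem edge_split {V : Type} {G : SimpleGraph V} {a b : V} (p : G.Walk a b) (u v : V) :
    s(u, v) ∈ p.edges ↔ ∃ l1 l2, p.support = l1 ++ u :: v :: l2 ∨ p.support = l1 ++ v :: u :: l2 := by
  induction p with
  | nil =>
    simp only [Walk.edges_nil, List.not_mem_nil, Walk.support_nil, false_iff]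
    rintro ⟨l1, l2, h | h⟩ <;>
    · have := congrArg List.length h
      simp at this
      omega
  | @cons a c d h p ih =>
    have hp : p.support = c :: p.support.tail := (Walk.cons_tail_support p).symm
    rw [Walk.edges_cons, List.mem_cons, ih, Walk.support_cons]
    constructor
    · rintro (h1 | ⟨l1, l2, h1 | h1⟩)
      · rw [Sym2.eq_iff] at h1
        rcases h1 with ⟨rfl, rfl⟩ | ⟨rfl, rfl⟩
        · exact ⟨[], p.support.tail, Or.inl (by rw [hp]; simp)⟩
        · exact ⟨[], p.support.tail, Or.inr (by rw [hp]; simp)⟩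
      · exact ⟨a :: l1, l2, Or.inl (by rw [h1]; simp)⟩
      · exact ⟨a :: l1, l2, Or.inr (by rw [h1]; simp)⟩
    · rintro ⟨l1, l2, h1 | h1⟩
      · rcases l1 with _ | ⟨e, l1⟩
        · rw [hp] at h1
          simp only [List.nil_append, List.cons.injEq] at h1
          left; rw [h1.1, h1.2.1]
        · simp only [List.cons_append, List.cons.injEq] at h1
          exact Or.inr ⟨l1, l2, Or.inl h1.2⟩
      · rcases l1 with _ | ⟨e, l1⟩
        · rw [hp] at h1
          simp only [List.nil_append, List.cons.injEq] at h1
          left; rw [h1.1, h1.2.1]; exact Sym2.eq_swap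
        · simp only [List.cons_append, List.cons.injEq] at h1
          exact Or.inr ⟨l1, l2, Or.inr h1.2⟩

theorem LLP_of_longest {V : Type} {G : SimpleGraph V} {a b : V} {p : G.Walk a b}
    (h : IsLongestPath G p) : LLP G p.support := by
  refine ⟨⟨p.isChain_adj_support, h.1.support_nodup⟩, ?_⟩
  intro l hl
  by_cases hne : l = []
  · simp [hne]
  · have := h.2 _ _ (Walk.ofSupport l hne hl.1) (by
      rw [Walk.isPath_def, Walk.support_ofSupport]; exact hl.2)
    have h2 := congrArg List.length (Walk.support_ofSupport hne hl.1)
    rw [Walk.length_support] at h2 ⊢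
    omega

/-- For a connected chordal `G` with minimal rooted tree representation,
a subtree `X` rooted at `x`, the `x`–`z` path `Q = q` in `X`, and a family `𝒫 = P` of
longest paths with the core capture property for `X`, there is `A ⊆ V(G)` with
`|A| ≤ 4 · ccg(X, x) + 5` such that the paths of `𝒫` disjoint from `A` either form an
empty family, or some component `X'` of `X − V(Q)` has the core capture property for
them. -/
theorem allpaths {V W : Type} [Fintype V] [Fintype W] (G : SimpleGraph V)
    (T : SimpleGraph W) (hconn : G.Connected) (hchordal : IsChordal G)
    (R : TreeRep G T) (hmin : R.IsMinimal) (r : W)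
    (x z : W) (hz : z ∈ rootedSubtree T r x)
    (q : T.Walk x z) (hq : q.IsPath) (hqX : ∀ w ∈ q.support, w ∈ rootedSubtree T r x)
    {ι : Type} (a b : ι → V) (P : ∀ i : ι, G.Walk (a i) (b i))
    (hP : ∀ i : ι, IsLongestPath G (P i))
    (hcap : ∀ i : ι, (R.core (P i).toSubgraph ∩ rootedSubtree T r x).Nonempty) :
    ∃ A : Set V, A.Finite ∧ A.ncard ≤ 4 * ccgOn T (rootedSubtree T r x) x + 5 ∧
      ((∀ i : ι, ∃ v ∈ A, v ∈ (P i).support) ∨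
        ∃ X' : Set W, IsCompOf T (rootedSubtree T r x \ {w : W | w ∈ q.support}) X' ∧
          ∀ i : ι, (∀ v ∈ A, v ∉ (P i).support) →
            (R.core (P i).toSubgraph ∩ X').Nonempty) := by
  classical
  have hT := R.isTree
  letI : PartialOrder W := tOrder hT r
  let R' : RRep W G :=
    { S := R.S
      chain := fun h1 h2 => tle_chain hT h1 h2
      ne := fun v => by
        obtain ⟨w⟩ := (R.subtree_connected v).nonempty
        exact ⟨w.1, w.2⟩
      adj := R.adj_iff
      sep := fun {v b s t} h1 h2 h3 h4 => tree_sep hT (R.subtree_connected v) h1 h2 h3 h4 }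
  have hcor : ∀ (i : ι) (t : W), R'.cor (P i).support t ↔ t ∈ R.core (P i).toSubgraph := by
    intro i t
    constructor
    · rintro ⟨l1, u, v, l2, he, hu, hv⟩
      refine ⟨u, v, ?_, hu, hv⟩
      rw [Walk.adj_toSubgraph_iff_mem_edges, edge_split]
      exact ⟨l1, l2, Or.inl he⟩
    · rintro ⟨u, v, huv, hu, hv⟩
      rw [Walk.adj_toSubgraph_iff_mem_edges, edge_split] at huv
      obtain ⟨l1, l2, h | h⟩ := huv
      · exact ⟨l1, u, v, l2, h, hu, hv⟩
      · exact ⟨l1, v, u, l2, h, hv, hu⟩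
  have hccg : cutterWins T (ccgOn T (rootedSubtree T r x) x) (rootedSubtree T r x) x :=
    Nat.sInf_mem (s := {t | cutterWins T t (rootedSubtree T r x) x})
      ⟨_, cutterWins_exists hT _ x le_rfl⟩
  have hwin := win_of_cutterWins hT _ x hccg
  have hF : ∀ l ∈ Set.range (fun i => (P i).support), LLP G l := by
    rintro l ⟨i, rfl⟩
    exact LLP_of_longest (hP i)
  have hF0 : ∀ l ∈ Set.range (fun i => (P i).support), R'.touch l x := by
    rintro l ⟨i, rfl⟩
    obtain ⟨t, h1, h2⟩ := hcap i
    exact ⟨t, (hcor i t).2 h1, h2⟩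
  have hQ := support_iff hT hz q hq hqX
  obtain ⟨A, hA, h⟩ := R'.main_abs hconn (z := z) hwin (Set.range (fun i => (P i).support)) hF hF0
    x le_rfl hz ∅ (by simp) (fun l hl _ => hF0 l hl)
  refine ⟨A, Set.toFinite A, hA, ?_⟩
  rcases h with h | ⟨y, b', h1, h2, h3, h4, h5⟩
  · exact Or.inl fun i => h _ ⟨i, rfl⟩
  · refine Or.inr ⟨rootedSubtree T r b', desc_comp hT hQ h1 h2 h3 h4, ?_⟩
    intro i hno
    obtain ⟨v, hv, hI⟩ := h5 _ ⟨i, rfl⟩ hno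
    obtain ⟨t, ht, hbt⟩ := R'.touch_of_I (hF _ ⟨i, rfl⟩)
      (RRep.two_le_of_touch (hF0 _ ⟨i, rfl⟩)) hv hI
    exact ⟨t, (hcor i t).1 ht, hbt⟩
end

section
/- If G is a connected chordal graph with a minimal tree representation T, then lpt(G) ≤ (4 · ccg(T) + 5) · ccg(T). -/
open SimpleGraph

namespace LPT

/-- A list of vertices forming a path of the graph. -/
def GP {V : Type} (G : SimpleGraph V) (l : List V) : Prop := l.IsChain G.Adj ∧ l.Nodup

/-- A list of vertices forming a longest path. -/
def LP {V : Type} (G : SimpleGraph V) (l : List V) : Prop :=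
  l ≠ [] ∧ GP G l ∧ ∀ l', GP G l' → l'.length ≤ l.length

section lists
variable {V : Type} {G : SimpleGraph V}

theorem GP.reverse {l : List V} (h : GP G l) : GP G l.reverse := by
  refine ⟨?_, List.nodup_reverse.2 h.2⟩
  rw [List.isChain_reverse]
  exact h.1.imp (fun _ _ h => h.symm)

theorem LP.reverse {l : List V} (h : LP G l) : LP G l.reverse := by
  refine ⟨by simpa using h.1, h.2.1.reverse, ?_⟩
  intro l' hl'
  simpa using h.2.2 l' hl'

theorem GP.subpath {l l' : List V} (h : GP G l) (h' : l' <:+: l) : GP G l' :=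
  ⟨by
    obtain ⟨A, B, rfl⟩ := h'
    exact (List.isChain_append.1 (List.isChain_append.1 h.1).1).2.1, h.2.sublist h'.sublist⟩

theorem GP.left {A B : List V} (h : GP G (A ++ B)) : GP G A :=
  h.subpath ⟨[], B, by simp⟩

theorem GP.right {A B : List V} (h : GP G (A ++ B)) : GP G B :=
  h.subpath ⟨A, [], by simp⟩

/-- Concatenation of two paths. -/
theorem GP.append {A B : List V} {a b : V} (hA : GP G (A ++ [a])) (hB : GP G (b :: B))
    (hab : G.Adj a b) (hd : ∀ x ∈ A ++ [a], x ∉ b :: B) : GP G (A ++ a :: b :: B) := by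
  refine ⟨?_, ?_⟩
  · rw [List.isChain_append_cons_cons]
    exact ⟨hA.1, hab, hB.1⟩
  · have : A ++ a :: b :: B = (A ++ [a]) ++ (b :: B) := by simp
    rw [this, List.nodup_append]
    exact ⟨hA.2, hB.2, fun x hx y hy hxy => hd x hx (hxy ▸ hy)⟩

/-- Glue two paths via an extra vertex. -/
theorem GP.glue {A B : List V} {a b v : V} (hA : GP G (A ++ [a])) (hB : GP G (b :: B))
    (hav : G.Adj a v) (hvb : G.Adj v b) (hvA : v ∉ A ++ [a]) (hvB : v ∉ b :: B)
    (hd : ∀ x ∈ A ++ [a], x ∉ b :: B) : GP G (A ++ a :: v :: b :: B) := by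
  refine GP.append hA ?_ hav ?_
  · have := GP.append (A := []) (a := v) (G := G) ⟨by simp, by simp⟩ hB hvb
      (by simpa using hvB)
    simpa using this
  · intro x hx hx'
    rcases List.mem_cons.1 hx' with rfl | h
    · exact hvA hx
    · exact hd x hx h

theorem chain_iff {l : List V} {p : V → Prop} (h : l.IsChain (fun u w => p u ↔ p w)) :
    ∀ u ∈ l, p u → ∀ w ∈ l, p w := by
  have key : ∀ l : List V, l.IsChain (fun u w => p u ↔ p w) → ∀ u ∈ l, ∀ w ∈ l, (p u ↔ p w) := by
    intro l
    induction l with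
    | nil => simp
    | cons a l ih =>
      intro h
      cases l with
      | nil => simp
      | cons b l =>
        rw [List.isChain_cons_cons] at h
        have ih' := ih h.2
        have hb : ∀ w ∈ b :: l, (p a ↔ p w) := fun w hw =>
          h.1.trans (ih' b (by simp) w hw)
        intro u hu w hw
        rcases List.mem_cons.1 hu with rfl | hu2 <;> rcases List.mem_cons.1 hw with rfl | hw2
        · rfl
        · exact hb w hw2
        · exact (hb u hu2).symm
        · exact ih' u hu2 w hw2
  intro u hu hpu w hw
  exact (key l h u hu w hw).1 hpu

theorem exists_max {α : Type*} (P : α → Prop) (f : α → ℕ) (N : ℕ) (h : ∃ a, P a)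
    (hN : ∀ a, P a → f a ≤ N) : ∃ a, P a ∧ ∀ b, P b → f b ≤ f a := by
  classical
  by_contra hcon
  push Not at hcon
  have : ∀ n : ℕ, ∃ a, P a ∧ n ≤ f a := by
    intro n
    induction n with
    | zero => obtain ⟨a, ha⟩ := h; exact ⟨a, ha, Nat.zero_le _⟩
    | succ n ih =>
      obtain ⟨a, ha, hn⟩ := ih
      obtain ⟨b, hb, hlt⟩ := hcon a ha
      exact ⟨b, hb, by omega⟩
  obtain ⟨a, ha, hn⟩ := this (N + 1)
  have := hN a ha
  omega

theorem run_right (D : Set V) (B : List V) : ∃ s R, B = s ++ R ∧ (∀ x ∈ s, x ∈ D) ∧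
    (R = [] ∨ ∃ x R', R = x :: R' ∧ x ∉ D) := by
  induction B with
  | nil => exact ⟨[], [], by simp⟩
  | cons b B ih =>
    by_cases hb : b ∈ D
    · obtain ⟨s, R, rfl, h1, h2⟩ := ih
      refine ⟨b :: s, R, by simp, ?_, h2⟩
      intro x hx
      rcases List.mem_cons.1 hx with rfl | hx
      · exact hb
      · exact h1 x hx
    · exact ⟨[], b :: B, by simp, by simp, Or.inr ⟨b, B, rfl, hb⟩⟩

theorem run_left (D : Set V) (B : List V) : ∃ L s, B = L ++ s ∧ (∀ x ∈ s, x ∈ D) ∧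
    (L = [] ∨ ∃ x L', L = L' ++ [x] ∧ x ∉ D) := by
  obtain ⟨s, R, h, h1, h2⟩ := run_right D B.reverse
  refine ⟨R.reverse, s.reverse, ?_, ?_, ?_⟩
  · rw [← List.reverse_append, ← h, List.reverse_reverse]
  · intro x hx; exact h1 x (by simpa using hx)
  · rcases h2 with rfl | ⟨x, R', rfl, hx⟩
    · left; rfl
    · right; exact ⟨x, R'.reverse, by simp, hx⟩

theorem run_max (D : Set V) (B : List V) (u : V) (hu : u ∈ B) (huD : u ∈ D) :
    ∃ L s R, B = L ++ (s ++ R) ∧ s ≠ [] ∧ (∀ x ∈ s, x ∈ D) ∧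
    (L = [] ∨ ∃ x L', L = L' ++ [x] ∧ x ∉ D) ∧ (R = [] ∨ ∃ x R', R = x :: R' ∧ x ∉ D) := by
  obtain ⟨A, C, rfl⟩ := List.append_of_mem hu
  obtain ⟨L, s, rfl, h1, h2⟩ := run_left D A
  obtain ⟨t, R, rfl, h3, h4⟩ := run_right D C
  refine ⟨L, s ++ u :: t, R, by simp, by simp, ?_, h2, h4⟩
  intro x hx
  simp only [List.mem_append, List.mem_cons] at hx
  rcases hx with hx | rfl | hx
  · exact h1 x hx
  · exact huD
  · exact h3 x hx

theorem adj_of_consec {l A B : List V} {a b : V} (h : GP G l) (hl : l = A ++ a :: b :: B) :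
    G.Adj a b := by
  have := h.1
  rw [hl, List.isChain_append_cons_cons] at this
  exact this.2.1

end lists
end LPT

namespace LPT

/-- Hypotheses for the combinatorial step on a clique-like separator `K`. -/
structure Setup {V β : Type} (G : SimpleGraph V) (F : Set (List V)) (K D : Set V) (h : V → β)
    (v1 v2 : V) : Prop where
  lp : ∀ l ∈ F, LP G l
  rev : ∀ l ∈ F, l.reverse ∈ F
  ne : v1 ≠ v2
  k1 : ∀ k ∈ K, k ≠ v1 → G.Adj k v1
  k2 : ∀ k ∈ K, k ≠ v2 → G.Adj k v2
  av1 : ∀ l ∈ F, v1 ∉ l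
  av2 : ∀ l ∈ F, v2 ∉ l
  dk : ∀ u ∈ D, u ∉ K
  d : ∀ u w, u ∈ D → w ∉ K → G.Adj u w → w ∈ D ∧ h u = h w
  meet : ∀ l ∈ F, ∃ u ∈ l, u ∈ D
  inter : ∀ l l', LP G l → LP G l' → ∃ u ∈ l, u ∈ l'

/-- `l` contains a `D`-segment between two `K`-vertices. -/
def Internal {V : Type} (K D : Set V) (l : List V) (L : List V) (a : V) (s : List V) (b : V)
    (R : List V) : Prop :=
  l = L ++ a :: (s ++ b :: R) ∧ a ∈ K ∧ b ∈ K ∧ s ≠ [] ∧ ∀ x ∈ s, x ∈ D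

section
variable {V β : Type} {G : SimpleGraph V} {F : Set (List V)} {K D : Set V} {h : V → β}
    {v1 v2 : V}

theorem Setup.const (H : Setup G F K D h v1 v2) {s : List V} (hs : GP G s)
    (hD : ∀ x ∈ s, x ∈ D) : ∀ u ∈ s, ∀ w ∈ s, h u = h w := by
  intro u hu
  refine chain_iff (p := fun w => h u = h w) ?_ u hu rfl
  refine List.IsChain.imp_of_mem_imp ?_ hs.1
  intro a b ha hb hab
  have := (H.d a b (hD a ha) (H.dk b (hD b hb)) hab).2
  simp only [this]

theorem Setup.memK (H : Setup G F K D h v1 v2) {u w : V} (hu : u ∈ D) (hw : w ∉ D)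
    (hadj : G.Adj u w) : w ∈ K := by
  by_contra hk
  exact hw (H.d u w hu hk hadj).1

theorem Setup.between (H : Setup G F K D h v1 v2) {l A M B : List V} {c c' u : V} (hl : GP G l)
    (e : l = A ++ c :: (M ++ c' :: B)) (hc : c ∉ D) (hc' : c' ∉ D) (hu : u ∈ M) (huD : u ∈ D) :
    ∃ L a s b R, Internal K D l L a s b R := by
  obtain ⟨L, s, R, rfl, hne, hs, hL, hR⟩ := run_max D M u hu huD
  have hl1 : ∃ L' a, a ∉ D ∧ A ++ c :: L = L' ++ [a] := by
    rcases hL with rfl | ⟨x, L', rfl, hx⟩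
    · exact ⟨A, c, hc, rfl⟩
    · exact ⟨A ++ c :: L', x, hx, by simp⟩
  have hr1 : ∃ R' b, b ∉ D ∧ R ++ c' :: B = b :: R' := by
    rcases hR with rfl | ⟨x, R', rfl, hx⟩
    · exact ⟨B, c', hc', rfl⟩
    · exact ⟨R' ++ c' :: B, x, hx, by simp⟩
  obtain ⟨L', a, ha, hLa⟩ := hl1
  obtain ⟨R', b, hb, hRb⟩ := hr1
  have e2 : l = L' ++ a :: (s ++ b :: R') := by
    have : l = (A ++ c :: L) ++ (s ++ (R ++ c' :: B)) := by rw [e]; simp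
    rw [this, hLa, hRb]; simp
  refine ⟨L', a, s, b, R', e2, ?_, ?_, hne, hs⟩
  · obtain ⟨s0, s', rfl⟩ := List.exists_cons_of_ne_nil hne
    have := adj_of_consec (G := G) (A := L') (a := a) (b := s0) (B := s' ++ b :: R') hl (by rw [e2]; simp)
    exact H.memK (hs s0 (by simp)) ha this.symm
  · obtain ⟨s', s0, rfl⟩ := List.eq_nil_or_concat s |>.resolve_left hne
    have := adj_of_consec (G := G) (A := L' ++ a :: s') (a := s0) (b := b) (B := R') hl (by rw [e2]; simp)
    exact H.memK (hs s0 (by simp)) hb this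

/-- path with a `D`-prefix. -/
def TypeA (K D : Set V) (l p : List V) (k : V) (R : List V) : Prop :=
  l = p ++ k :: R ∧ k ∈ K ∧ (∀ x ∈ p, x ∈ D) ∧ ∀ x ∈ R, x ∉ D

/-- path with a `D`-prefix and a `D`-suffix. -/
def TypeB (K D : Set V) (l p : List V) (k : V) (M : List V) (k' : V) (q : List V) : Prop :=
  l = p ++ k :: (M ++ k' :: q) ∧ k ∈ K ∧ k' ∈ K ∧ (∀ x ∈ p, x ∈ D) ∧ (∀ x ∈ M, x ∉ D) ∧
    ∀ x ∈ q, x ∈ D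

/-- path in `D` but for one vertex. -/
def TypeC (K D : Set V) (l p : List V) (k : V) (q : List V) : Prop :=
  l = p ++ k :: q ∧ k ∈ K ∧ (∀ x ∈ p, x ∈ D) ∧ ∀ x ∈ q, x ∈ D

theorem Setup.classify_aux (H : Setup G F K D h v1 v2) {l s R : List V} {k : V} (hl : GP G l)
    (e : l = s ++ k :: R) (hne : s ≠ []) (hs : ∀ x ∈ s, x ∈ D) (hk : k ∉ D)
    (hni : ¬ ∃ L a s b R, Internal K D l L a s b R) :
    (∃ p k R, TypeA K D l p k R) ∨ (∃ p k M k' q, TypeB K D l p k M k' q) ∨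
      ∃ p k q, TypeC K D l p k q := by
  have hkK : k ∈ K := by
    obtain ⟨s', s0, rfl⟩ := List.eq_nil_or_concat s |>.resolve_left hne
    have := adj_of_consec (G := G) (A := s') (a := s0) (b := k) (B := R) hl (by rw [e]; simp)
    exact H.memK (hs s0 (by simp)) hk this
  by_cases hR : ∀ x ∈ R, x ∉ D
  · left; exact ⟨s, k, R, e, hkK, hs, hR⟩
  push Not at hR
  obtain ⟨u, huR, huD⟩ := hR
  obtain ⟨L2, s2, R2, rfl, hne2, hs2, hL2, hR2⟩ := run_max D R u huR huD
  obtain ⟨s0, s', rfl⟩ := List.exists_cons_of_ne_nil hne2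
  rcases hR2 with rfl | ⟨x, R', rfl, hx⟩
  · rcases hL2 with rfl | ⟨y, L', rfl, hy⟩
    · right; right
      exact ⟨s, k, s0 :: s', by rw [e]; simp, hkK, hs, hs2⟩
    · right; left
      refine ⟨s, k, L', y, s0 :: s', by rw [e]; simp, hkK, ?_, hs, ?_, hs2⟩
      · have := adj_of_consec (G := G) (A := s ++ k :: L') (a := y) (b := s0) (B := s') hl
          (by rw [e]; simp)
        exact H.memK (hs2 s0 (by simp)) hy this.symm
      · intro z hz hzD
        exact hni (H.between (A := s) (c := k) (M := L') (c' := y) (B := s0 :: s') hl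
          (by rw [e]; simp) hk hy hz hzD)
  · exfalso
    exact hni (H.between (A := s) (c := k) (M := L2 ++ s0 :: s') (c' := x) (B := R') (u := s0) hl
      (by rw [e]; simp) hk hx (by simp) (hs2 s0 (by simp)))

theorem internal_reverse {l L s R : List V} {a b : V} (hi : Internal K D l L a s b R) :
    Internal K D l.reverse R.reverse b s.reverse a L.reverse := by
  obtain ⟨rfl, ha, hb, hs, hD⟩ := hi
  exact ⟨by simp, hb, ha, by simpa using hs, by simpa using hD⟩

theorem Setup.classify (H : Setup G F K D h v1 v2) {l : List V} (hl : GP G l)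
    (hm : ∃ u ∈ l, u ∈ D) (hw : ¬ ∀ u ∈ l, u ∈ D)
    (hni : ¬ ∃ L a s b R, Internal K D l L a s b R) :
    ∃ l', (l' = l ∨ l' = l.reverse) ∧
    ((∃ p k R, TypeA K D l' p k R) ∨ (∃ p k M k' q, TypeB K D l' p k M k' q) ∨
      ∃ p k q, TypeC K D l' p k q) := by
  obtain ⟨u, hu, huD⟩ := hm
  obtain ⟨L, s, R, e, hne, hs, hL, hR⟩ := run_max D l u hu huD
  rcases hL with rfl | ⟨x, L', rfl, hx⟩
  · rcases hR with rfl | ⟨y, R', rfl, hy⟩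
    · exfalso; apply hw; rw [e]; simpa using hs
    · exact ⟨l, Or.inl rfl, H.classify_aux hl (by simpa using e) hne hs hy hni⟩
  · rcases hR with rfl | ⟨y, R', rfl, hy⟩
    · refine ⟨l.reverse, Or.inr rfl, H.classify_aux (s := s.reverse) (k := x) (R := L'.reverse)
        hl.reverse (by rw [e]; simp) (by simpa using hne) (by simpa using hs) hx ?_⟩
      rintro ⟨A, a, t, b, B, hi⟩
      have := internal_reverse hi
      rw [List.reverse_reverse] at this
      exact hni ⟨_, _, _, _, _, this⟩
    · exfalso
      obtain ⟨s0, s', rfl⟩ := List.exists_cons_of_ne_nil hne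
      exact hni (H.between (A := L') (c := x) (M := s0 :: s') (c' := y) (B := R') (u := s0) hl
        (by rw [e]; simp) hx hy (by simp) (hs s0 (by simp)))

theorem Setup.lemA (H : Setup G F K D h v1 v2) : ∃ B : Finset V, B.card ≤ 1 ∧
    ∀ l ∈ F, ∀ p k R, TypeA K D l p k R → ∃ b ∈ B, b ∈ l := by
  classical
  by_cases hex : ∃ t : List V × V × List V, (t.1 ++ t.2.1 :: t.2.2) ∈ F ∧
      TypeA K D (t.1 ++ t.2.1 :: t.2.2) t.1 t.2.1 t.2.2
  swap
  · refine ⟨∅, by simp, ?_⟩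
    intro l hl p k R hA
    exact absurd ⟨(p, k, R), hA.1 ▸ hl, hA.1 ▸ hA⟩ hex
  have hex' := hex
  obtain ⟨l0, hl0, -⟩ := hex
  have hex2 := exists_max _ (fun t => t.1.length) _ hex' (by
    rintro ⟨p, k, R⟩ ⟨h1, h2⟩
    have h3 := (H.lp _ hl0).2.2 _ (H.lp _ h1).2.1
    refine le_trans ?_ h3
    simp)
  obtain ⟨⟨p, k, R⟩, ⟨hF, hT⟩, hmax⟩ := hex2
  obtain ⟨-, hk, hp, hR⟩ := hT
  dsimp only at *
  refine ⟨{k}, by simp, ?_⟩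
  rintro l' hl' p' k' R' ⟨rfl, hk', hp', hR'⟩
  by_contra hcon
  simp only [Finset.mem_singleton, exists_eq_left] at hcon
  have hm := hmax (p', k', R') ⟨hl', rfl, hk', hp', hR'⟩
  dsimp only at hm
  have a1 := H.av1 _ hF
  have a2 := H.av1 _ hl'
  have g1 := (H.lp _ hF).2.1
  have g2 := (H.lp _ hl').2.1
  have gp : GP G (p ++ k :: v1 :: k' :: R') := by
    refine GP.glue ?_ g2.right ?_ ?_ ?_ ?_ ?_
    · exact GP.left (B := R) (by simpa using g1)
    · exact H.k1 k hk (by grind)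
    · exact (H.k1 k' hk' (by grind)).symm
    · grind
    · grind
    · have := H.dk
      grind
  have := (H.lp _ hl').2.2 _ gp
  simp at this
  omega

theorem Setup.lemB (H : Setup G F K D h v1 v2) : ∃ B : Finset V, B.card ≤ 2 ∧
    ∀ l ∈ F, ∀ p k M k' q, TypeB K D l p k M k' q → ∃ b ∈ B, b ∈ l := by
  classical
  by_cases hex : ∃ t : List V × V × List V × V × List V,
      (t.1 ++ t.2.1 :: (t.2.2.1 ++ t.2.2.2.1 :: t.2.2.2.2)) ∈ F ∧
      TypeB K D (t.1 ++ t.2.1 :: (t.2.2.1 ++ t.2.2.2.1 :: t.2.2.2.2)) t.1 t.2.1 t.2.2.1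
        t.2.2.2.1 t.2.2.2.2
  swap
  · refine ⟨∅, by simp, ?_⟩
    intro l hl p k M k' q hA
    exact absurd ⟨(p, k, M, k', q), hA.1 ▸ hl, hA.1 ▸ hA⟩ hex
  have hex' := hex
  obtain ⟨l0, hl0, -⟩ := hex
  have hex2 := exists_max _ (fun t => t.1.length + t.2.2.2.2.length) _ hex' (by
    rintro ⟨p, k, M, k', q⟩ ⟨h1, h2⟩
    have h3 := (H.lp _ hl0).2.2 _ (H.lp _ h1).2.1
    refine le_trans ?_ h3
    simp
    omega)
  obtain ⟨⟨p, k, M, k2, q⟩, ⟨hF, hT⟩, hmax⟩ := hex2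
  obtain ⟨-, hk, hk2, hp, hM, hq⟩ := hT
  dsimp only at *
  refine ⟨{k, k2}, Finset.card_le_two, ?_⟩
  rintro l' hl' p' k' M' k2' q' ⟨rfl, hk', hk2', hp', hM', hq'⟩
  by_contra hcon
  simp only [Finset.mem_singleton, Finset.mem_insert, exists_eq_or_imp, exists_eq_left, not_or]
    at hcon
  have hm := hmax (p', k', M', k2', q') ⟨hl', rfl, hk', hk2', hp', hM', hq'⟩
  dsimp only at hm
  have a1 := H.av1 _ hF
  have a2 := H.av1 _ hl'
  have b1 := H.av2 _ hF
  have b2 := H.av2 _ hl'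
  have g1 := (H.lp _ hF).2.1
  have g2 := (H.lp _ hl').2.1
  have hdk := H.dk
  have hne := H.ne
  have n1 := g1.2
  have n2 := g2.2
  obtain ⟨c1, c2⟩ := hcon
  have gp1 : GP G (p ++ k :: v1 :: k' :: (M' ++ [k2'])) := by
    refine GP.glue ?_ ?_ ?_ ?_ ?_ ?_ ?_
    · exact GP.left (B := M ++ k2 :: q) (by simpa using g1)
    · exact GP.left (B := q') (by simpa using g2.right)
    · exact H.k1 k hk (by grind)
    · exact (H.k1 k' hk' (by grind)).symm
    · grind
    · grind
    · grind
  have gp2 : GP G ((p ++ k :: v1 :: k' :: M') ++ k2' :: v2 :: k2 :: q) := by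
    refine GP.glue (by simpa using gp1) ?_ ?_ ?_ ?_ ?_ ?_
    · exact GP.right (A := p ++ k :: M) (by simpa using g1)
    · exact H.k2 k2' hk2' (by grind)
    · exact (H.k2 k2 hk2 (by grind)).symm
    · grind
    · grind
    · have : ∀ x ∈ p ++ [k], x ∉ k2 :: q := by
        rw [List.nodup_append] at n1
        intro x hx hx'
        grind
      grind
  have := (H.lp _ hl').2.2 _ gp2
  simp at this
  omega

theorem Setup.lemC (H : Setup G F K D h v1 v2)
    (hns : ∀ l ∈ F, ∀ p k q, TypeC K D l p k q → ∀ u ∈ p, ∀ w ∈ q, h u ≠ h w) :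
    ∃ B : Finset V, B.card ≤ 1 ∧
    ∀ l ∈ F, ∀ p k q, TypeC K D l p k q → ∃ b ∈ B, b ∈ l := by
  classical
  by_cases hex : ∃ l ∈ F, ∃ p k q, TypeC K D l p k q ∧ q.length ≤ p.length
  swap
  · refine ⟨∅, by simp, ?_⟩
    intro l hl p k q hA
    exfalso
    rcases le_total q.length p.length with hle | hle
    · exact hex ⟨l, hl, p, k, q, hA, hle⟩
    · obtain ⟨rfl, hk, hp, hq⟩ := hA
      exact hex ⟨_, H.rev _ hl, q.reverse, k, p.reverse, ⟨by simp, hk, by simpa using hq,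
        by simpa using hp⟩, by simpa using hle⟩
  obtain ⟨l, hl, p, k, q, hT, hpq⟩ := hex
  have key : ∀ l1 ∈ F, ∀ l2 ∈ F, ∀ p1 k1 q1 p2 k2 q2, TypeC K D l1 p1 k1 q1 →
      TypeC K D l2 p2 k2 q2 → q1.length ≤ p1.length → q2.length ≤ p2.length → k1 ≠ k2 →
      q2.length + 2 ≤ q1.length := by
    rintro l1 hl1 l2 hl2 p1 k1 q1 p2 k2 q2 h1 h2 hle1 hle2 hne
    have hns2 := hns l2 hl2 p2 k2 q2 h2
    obtain ⟨rfl, hk1, hp1, hq1⟩ := h1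
    obtain ⟨rfl, hk2, hp2, hq2⟩ := h2
    have a1 := H.av1 _ hl1
    have a2 := H.av1 _ hl2
    have g1 := (H.lp _ hl1).2.1
    have g2 := (H.lp _ hl2).2.1
    have hdk := H.dk
    have e1 := (H.lp _ hl1).2.2 _ g2
    have e2 := (H.lp _ hl2).2.2 _ g1
    have g3 : GP G (p1 ++ [k1]) := GP.left (B := q1) (by simpa using g1)
    have hsh : ∃ x ∈ p1, x ∈ p2 := by
      by_contra hcon
      push Not at hcon
      have gp : GP G (p1 ++ k1 :: v1 :: k2 :: p2.reverse) := by
        refine GP.glue g3 ?_ ?_ ?_ ?_ ?_ ?_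
        · have : GP G (p2 ++ [k2]) := GP.left (B := q2) (by simpa using g2)
          simpa using this.reverse
        · exact H.k1 k1 hk1 (by grind)
        · exact (H.k1 k2 hk2 (by grind)).symm
        · grind
        · grind
        · grind
      have := (H.lp _ hl1).2.2 _ gp
      simp at this e1 e2
      omega
    obtain ⟨x, hx1, hx2⟩ := hsh
    have hc := H.const g1.left hp1
    have gp : GP G (p1 ++ k1 :: v1 :: k2 :: q2) := by
      refine GP.glue g3 g2.right ?_ ?_ ?_ ?_ ?_
      · exact H.k1 k1 hk1 (by grind)
      · exact (H.k1 k2 hk2 (by grind)).symm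
      · grind
      · grind
      · have : ∀ u ∈ p1, u ∉ q2 := fun u hu hu2 => hns2 x hx2 u hu2 (hc x hx1 u hu)
        grind
    have := (H.lp _ hl1).2.2 _ gp
    simp at this
    omega
  refine ⟨{k}, by simp, ?_⟩
  have main : ∀ l ∈ F, ∀ p' k' q', TypeC K D l p' k' q' → q'.length ≤ p'.length → k ∈ l := by
    intro l' hl' p' k' q' hT' hle'
    by_cases hkk : k = k'
    · rw [hT'.1, hkk]; simp
    · exfalso
      have h1 := key l hl l' hl' p k q p' k' q' hT hT' hpq hle' hkk
      have h2 := key l' hl' l hl p' k' q' p k q hT' hT hle' hpq (Ne.symm hkk)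
      omega
  intro l' hl' p' k' q' hT'
  refine ⟨k, by simp, ?_⟩
  rcases le_total q'.length p'.length with hle | hle
  · exact main l' hl' p' k' q' hT' hle
  · obtain ⟨rfl, hk', hp', hq'⟩ := hT'
    have := main (p' ++ k' :: q').reverse (H.rev _ hl') q'.reverse k' p'.reverse ⟨by simp, hk', by simpa using hq',
        by simpa using hp'⟩ (by simpa using hle)
    simp only [List.mem_reverse] at this
    exact this

set_option maxHeartbeats 800000 in
theorem Setup.lemI (H : Setup G F K D h v1 v2)
    (hex : ∃ l ∈ F, ∃ L a s b R, Internal K D l L a s b R) :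
    ∃ B : Finset V, B.card ≤ 2 ∧ ∃ u0 ∈ D, ∀ l ∈ F, (∃ L a s b R, Internal K D l L a s b R) →
      (∃ b ∈ B, b ∈ l) ∨ ∃ u ∈ l, u ∈ D ∧ h u = h u0 := by
  classical
  have hex' : ∃ s : List V, ∃ l ∈ F, ∃ L a b R, Internal K D l L a s b R := by
    obtain ⟨l, hl, L, a, s, b, R, hi⟩ := hex
    exact ⟨s, l, hl, L, a, b, R, hi⟩
  obtain ⟨l0, hl0, -⟩ := hex
  obtain ⟨s, ⟨l, hl, L, a, b, R, hi⟩, hmax⟩ := exists_max _ (fun s : List V => s.length) l0.length hex' (by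
    rintro s ⟨l, hl, L, a, b, R, hi⟩
    have h3 := (H.lp _ hl0).2.2 _ (H.lp _ hl).2.1
    rw [hi.1] at h3
    simp at h3
    omega)
  obtain ⟨rfl, ha, hb, hs, hsD⟩ := hi
  obtain ⟨u0, hu0⟩ := List.exists_mem_of_ne_nil s hs
  refine ⟨{a, b}, Finset.card_le_two, u0, hsD u0 hu0, ?_⟩
  rintro l' hl' ⟨L', a', s', b', R', hi'⟩
  by_contra hcon
  have hm := hmax s' ⟨l', hl', L', a', b', R', hi'⟩
  obtain ⟨rfl, ha', hb', hs', hsD'⟩ := hi'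
  simp only [Finset.mem_singleton, Finset.mem_insert, exists_eq_or_imp, exists_eq_left, not_or]
    at hcon
  obtain ⟨⟨c1, c2⟩, hlab⟩ := hcon
  have a1 := H.av1 _ hl
  have a2 := H.av1 _ hl'
  have b1 := H.av2 _ hl
  have b2 := H.av2 _ hl'
  have g1 := (H.lp _ hl).2.1
  have g2 := (H.lp _ hl').2.1
  have hdk := H.dk
  have hne := H.ne
  have n1 := g1.2
  have n2 := g2.2
  have gs : GP G s := g1.subpath ⟨L ++ [a], b :: R, by simp⟩
  have hc := H.const gs hsD
  have hdis : ∀ x ∈ s, x ∉ L' ++ a' :: (s' ++ b' :: R') := fun x hx hx' =>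
    hlab ⟨x, hx', hsD x hx, hc x hx u0 hu0⟩
  have gp1 : GP G (L' ++ a' :: v1 :: a :: (s ++ [b])) := by
    refine GP.glue ?_ ?_ ?_ ?_ ?_ ?_ ?_
    · exact g2.subpath ⟨[], s' ++ b' :: R', by simp⟩
    · exact g1.subpath ⟨L, R, by simp⟩
    · exact H.k1 a' ha' (by grind)
    · exact (H.k1 a ha (by grind)).symm
    · grind
    · grind
    · grind
  have gp2 : GP G ((L' ++ a' :: v1 :: a :: s) ++ b :: v2 :: b' :: R') := by
    refine GP.glue (by simpa using gp1) ?_ ?_ ?_ ?_ ?_ ?_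
    · exact g2.subpath ⟨L' ++ a' :: s', [], by simp⟩
    · exact H.k2 b hb (by grind)
    · exact (H.k2 b' hb' (by grind)).symm
    · grind
    · grind
    · have : ∀ x ∈ L' ++ [a'], x ∉ b' :: R' := by
        rw [List.nodup_append] at n2
        intro x hx hx'
        grind
      intro x hx hx'
      have hfull : x ∈ L' ++ a' :: (s' ++ b' :: R') :=
        List.mem_append_right L' (List.mem_cons_of_mem _ (List.mem_append_right s' hx'))
      rw [List.append_assoc] at hx
      simp only [List.mem_append, List.mem_cons, List.cons_append, List.not_mem_nil, or_false] at hx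
      rcases hx with hx | hx | hx | hx | hx | hx
      · exact this x (List.mem_append_left _ hx) hx'
      · exact this x (by simp [hx]) hx'
      · exact a2 (hx ▸ hfull)
      · exact c1 (hx ▸ hfull)
      · exact hdis x hx hfull
      · exact c2 (hx ▸ hfull)
  have := (H.lp _ hl').2.2 _ gp2
  simp at this
  omega

theorem Setup.step (H : Setup G F K D h v1 v2) : ∃ B : Finset V, B.card ≤ 6 ∧
    ((∀ l ∈ F, ∃ b ∈ B, b ∈ l) ∨
      ∃ u0 ∈ D, ∀ l ∈ F, (∃ b ∈ B, b ∈ l) ∨ ∃ u ∈ l, u ∈ D ∧ h u = h u0) := by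
  classical
  by_cases hw : ∃ l ∈ F, ∀ u ∈ l, u ∈ D
  · obtain ⟨l, hl, hD⟩ := hw
    obtain ⟨u0, hu0, hu0D⟩ := H.meet l hl
    refine ⟨∅, by simp, Or.inr ⟨u0, hu0D, ?_⟩⟩
    intro l' hl'
    obtain ⟨u, hu, hu'⟩ := H.inter l l' (H.lp _ hl) (H.lp _ hl')
    exact Or.inr ⟨u, hu', hD u hu, H.const (H.lp _ hl).2.1 hD u hu u0 hu0⟩
  by_cases hsame : ∃ l ∈ F, ∃ p k q, TypeC K D l p k q ∧ ∃ u ∈ p, ∃ w ∈ q, h u = h w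
  · obtain ⟨l, hl, p, k, q, ⟨rfl, hk, hp, hq⟩, u, hu, w, hw, huw⟩ := hsame
    refine ⟨{k}, by simp, Or.inr ⟨u, hp u hu, ?_⟩⟩
    intro l' hl'
    obtain ⟨x, hx, hx'⟩ := H.inter _ l' (H.lp _ hl) (H.lp _ hl')
    have g1 := (H.lp _ hl).2.1
    simp only [List.mem_append, List.mem_cons] at hx
    rcases hx with hx | rfl | hx
    · exact Or.inr ⟨x, hx', hp x hx, H.const g1.left hp x hx u hu⟩
    · exact Or.inl ⟨x, by simp, hx'⟩
    · refine Or.inr ⟨x, hx', hq x hx, ?_⟩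
      rw [huw]
      exact H.const (g1.subpath ⟨p ++ [k], [], by simp⟩) hq x hx w hw
  push Not at hw hsame
  obtain ⟨BA, hA, hA'⟩ := H.lemA
  obtain ⟨BB, hB, hB'⟩ := H.lemB
  obtain ⟨BC, hC, hC'⟩ := H.lemC (fun l hl p k q hT u hu w hw => hsame l hl p k q hT u hu w hw)
  have hrest : ∀ l ∈ F, (¬ ∃ L a s b R, Internal K D l L a s b R) →
      ∃ b ∈ BA ∪ BB ∪ BC, b ∈ l := by
    intro l hl hni
    obtain ⟨l', hl', hcl⟩ := H.classify (H.lp _ hl).2.1 (H.meet l hl)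
      (by push Not; exact hw l hl) hni
    have hl'F : l' ∈ F := by
      rcases hl' with rfl | rfl
      · exact hl
      · exact H.rev _ hl
    have hmem : ∀ b, b ∈ l' → b ∈ l := by
      rcases hl' with rfl | rfl <;> simp
    rcases hcl with ⟨p, k, R, hT⟩ | ⟨p, k, M, k', q, hT⟩ | ⟨p, k, q, hT⟩
    · obtain ⟨b, hb, hb'⟩ := hA' l' hl'F p k R hT
      exact ⟨b, by simp [hb], hmem b hb'⟩
    · obtain ⟨b, hb, hb'⟩ := hB' l' hl'F p k M k' q hT
      exact ⟨b, by simp [hb], hmem b hb'⟩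
    · obtain ⟨b, hb, hb'⟩ := hC' l' hl'F p k q hT
      exact ⟨b, by simp [hb], hmem b hb'⟩
  have hcard : (BA ∪ BB ∪ BC).card ≤ 4 := by
    have h1 := Finset.card_union_le (BA ∪ BB) BC
    have h2 := Finset.card_union_le BA BB
    omega
  by_cases hInter : ∃ l ∈ F, ∃ L a s b R, Internal K D l L a s b R
  · obtain ⟨BI, hI, u0, hu0, hI'⟩ := H.lemI hInter
    refine ⟨BI ∪ (BA ∪ BB ∪ BC), ?_, Or.inr ⟨u0, hu0, ?_⟩⟩
    · have := Finset.card_union_le BI (BA ∪ BB ∪ BC)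
      omega
    · intro l hl
      by_cases hi : ∃ L a s b R, Internal K D l L a s b R
      · rcases hI' l hl hi with ⟨b, hb, hb'⟩ | hh
        · exact Or.inl ⟨b, Finset.mem_union_left _ hb, hb'⟩
        · exact Or.inr hh
      · obtain ⟨b, hb, hb'⟩ := hrest l hl hi
        exact Or.inl ⟨b, Finset.mem_union_right _ hb, hb'⟩
  · refine ⟨BA ∪ BB ∪ BC, by omega, Or.inl ?_⟩
    intro l hl
    exact hrest l hl (fun hi => hInter ⟨l, hl, hi⟩)

end
end LPT

namespace LPT

section
variable {V : Type} {G : SimpleGraph V}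

theorem GP.join {A B : List V} {x : V} (hA : GP G (A ++ [x])) (hB : GP G (x :: B))
    (hd : ∀ y ∈ A, y ∉ x :: B) : GP G (A ++ x :: B) := by
  refine ⟨List.isChain_split.2 ⟨hA.1, hB.1⟩, ?_⟩
  rw [List.nodup_append]
  exact ⟨hA.left.2, hB.2, fun a ha b hb hab => hd a ha (hab ▸ hb)⟩

theorem GP.of_path {u w : V} {p : G.Walk u w} (hp : p.IsPath) : GP G p.support :=
  ⟨p.isChain_adj_support, hp.support_nodup⟩

theorem LP.half {l : List V} {u : V} (hl : LP G l) (hu : u ∈ l) :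
    ∃ h, GP G (h ++ [u]) ∧ l.length ≤ 2 * h.length + 1 ∧ ∀ x ∈ h, x ∈ l := by
  obtain ⟨A, B, rfl⟩ := List.append_of_mem hu
  have g := hl.2.1
  rcases le_total A.length B.length with hle | hle
  · refine ⟨B.reverse, ?_, ?_, ?_⟩
    · simpa using g.right.reverse
    · simp; omega
    · intro x hx; simp at hx; simp [hx]
  · refine ⟨A, GP.left (B := B) (by simpa using g), ?_, ?_⟩
    · simp; omega
    · intro x hx; simp [hx]

theorem LP.inter (hconn : G.Connected) {l1 l2 : List V} (h1 : LP G l1) (h2 : LP G l2) :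
    ∃ u ∈ l1, u ∈ l2 := by
  classical
  by_contra hcon
  push Not at hcon
  have hex : ∃ n, ∃ u ∈ l1, ∃ w ∈ l2, G.dist u w = n := by
    obtain ⟨u, hu⟩ := List.exists_mem_of_ne_nil _ h1.1
    obtain ⟨w, hw⟩ := List.exists_mem_of_ne_nil _ h2.1
    exact ⟨_, u, hu, w, hw, rfl⟩
  obtain ⟨u, hu, w, hw, hn⟩ := Nat.find_spec hex
  have hmin : ∀ u' ∈ l1, ∀ w' ∈ l2, G.dist u w ≤ G.dist u' w' := by
    intro u' hu' w' hw'
    rw [hn]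
    exact Nat.find_min' hex ⟨u', hu', w', hw', rfl⟩
  obtain ⟨p, hp, hpl⟩ := hconn.exists_path_of_dist u w
  have c1 : ∀ x ∈ p.support, x ∈ l1 → x = u := by
    intro x hx hxl
    have e := congrArg Walk.length (p.take_spec hx)
    rw [Walk.length_append] at e
    have := hmin x hxl w hw
    have h3 := dist_le (p.dropUntil x hx)
    have : (p.takeUntil x hx).length = 0 := by omega
    exact (Walk.eq_of_length_eq_zero this).symm
  have c2 : ∀ x ∈ p.support, x ∈ l2 → x = w := by
    intro x hx hxl
    have e := congrArg Walk.length (p.take_spec hx)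
    rw [Walk.length_append] at e
    have := hmin u hu x hxl
    have h3 := dist_le (p.takeUntil x hx)
    have : (p.dropUntil x hx).length = 0 := by omega
    exact (Walk.eq_of_length_eq_zero this)
  have huw : u ≠ w := fun h => hcon u hu (h ▸ hw)
  have hlen : 1 ≤ p.length := by
    rw [hpl]
    exact Nat.one_le_iff_ne_zero.2 (fun h0 => huw ((hconn.dist_eq_zero_iff).1 h0))
  obtain ⟨a1, g1, n1, m1⟩ := h1.half hu
  obtain ⟨a2, g2, n2, m2⟩ := h2.half hw
  have gp := GP.of_path hp
  have es : p.support = u :: p.support.tail := (Walk.cons_tail_support p).symm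
  have j1 : GP G (a1 ++ u :: p.support.tail) := by
    refine GP.join g1 (es ▸ gp) ?_
    intro y hy hy'
    rw [← es] at hy'
    have := c1 y hy' (m1 y hy)
    subst this
    have := g1.2
    rw [List.nodup_append] at this
    exact this.2.2 y hy y (by simp) rfl
  rw [← es] at j1
  have et : ∃ P, p.support = P ++ [w] := by
    have hne : p.support ≠ [] := by simp
    refine ⟨p.support.dropLast, ?_⟩
    have := List.dropLast_append_getLast hne
    rw [Walk.getLast_support] at this
    exact this.symm
  obtain ⟨P, eP⟩ := et
  have hPl : P.length = p.length := by
    have := congrArg List.length eP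
    simp at this
    omega
  have j2 : GP G ((a1 ++ P) ++ w :: a2.reverse) := by
    refine GP.join (by rw [eP] at j1; simpa using j1) (by simpa using g2.reverse) ?_
    intro y hy hy'
    have hyl : y ∈ l2 := by
      simp only [List.mem_cons, List.mem_reverse] at hy'
      rcases hy' with rfl | hy'
      · exact hw
      · exact m2 y hy'
    rcases List.mem_append.1 hy with hy | hy
    · exact hcon y (m1 y hy) hyl
    · have := c2 y (by rw [eP]; simp [hy]) hyl
      subst this
      have := gp.2
      rw [eP, List.nodup_append] at this
      exact this.2.2 y hy y (by simp) rfl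
  have f1 := h1.2.2 _ j2
  have f2 := h2.2.2 _ h1.2.1
  simp at f1
  omega

theorem IsLongestPath.lp {a b : V} {p : G.Walk a b} (hp : IsLongestPath G p) :
    LP G p.support := by
  refine ⟨by simp, GP.of_path hp.1, ?_⟩
  intro l hl
  by_cases hne : l = []
  · simp [hne]
  have := hp.2 _ _ (Walk.ofSupport l hne hl.1) (by
    rw [Walk.isPath_def, Walk.support_ofSupport]; exact hl.2)
  have e := congrArg List.length (Walk.support_ofSupport hne hl.1)
  rw [Walk.length_support] at e
  rw [Walk.length_support]
  omega

end
end LPT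

namespace LPT

section tree
variable {W : Type} {T : SimpleGraph W}

theorem walk_of_conn {S : Set W} (hS : (T.induce S).Connected) {a b : W} (ha : a ∈ S) (hb : b ∈ S) :
    ∃ p : T.Walk a b, ∀ x ∈ p.support, x ∈ S := by
  obtain ⟨p⟩ := hS.preconnected ⟨a, ha⟩ ⟨b, hb⟩
  have key : ∀ (a b : S) (_ : (T.induce S).Walk a b),
      ∃ q : T.Walk a.1 b.1, ∀ x ∈ q.support, x ∈ S := by
    intro a b p
    induction p with
    | @nil a => exact ⟨Walk.nil, by simp⟩
    | @cons a b c hab p ih =>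
      obtain ⟨q, hq⟩ := ih
      refine ⟨Walk.cons (show T.Adj a.1 b.1 from hab) q, ?_⟩
      intro x hx
      rw [Walk.support_cons, List.mem_cons] at hx
      rcases hx with rfl | hx
      · exact a.2
      · exact hq x hx
  exact key _ _ p

theorem bridge (hT : T.IsTree) {a b : W} (hab : T.Adj a b) (p : T.Walk a b) : s(a, b) ∈ p.edges :=
  isBridge_iff_forall_walk_mem_edges.1 (isAcyclic_iff_forall_adj_isBridge.1 hT.isAcyclic hab) p

theorem two_edge (hT : T.IsTree) {C Q : Set W} (hC : (T.induce C).Connected)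
    (hQ : (T.induce Q).Connected) (hd : ∀ x ∈ C, x ∉ Q) {w x' w' u : W} (hw : w ∈ C) (hx : x' ∈ C)
    (hw' : w' ∈ Q) (hu : u ∈ Q) (h1 : T.Adj w w') (h2 : T.Adj x' u) : w = x' ∧ w' = u := by
  obtain ⟨p, hp⟩ := walk_of_conn hC hw hx
  obtain ⟨q, hq⟩ := walk_of_conn hQ hu hw'
  have := bridge hT h1 (p.append (Walk.cons h2 q))
  rw [Walk.edges_append, Walk.edges_cons, List.mem_append, List.mem_cons] at this
  rcases this with h | h | h
  · exact absurd hw' (hd _ (hp _ (p.snd_mem_support_of_mem_edges h)))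
  · rw [Sym2.eq_iff] at h
    rcases h with h | h
    · exact h
    · exact absurd (h.1 ▸ hu) (hd _ hw)
  · exact absurd (hq _ (q.fst_mem_support_of_mem_edges h)) (hd _ hw)

/-- Coordinates along the cut path. -/
structure Coord (T : SimpleGraph W) (X Q : Set W) (n : ℕ) (q : ℕ → W) (d : W → ℕ) : Prop where
  mem : ∀ w, w ∈ X ↔ 1 ≤ d w
  le : ∀ w, d w ≤ n
  qQ : ∀ i, 1 ≤ i → i ≤ n → q i ∈ Q
  dq : ∀ i, 1 ≤ i → i ≤ n → d (q i) = i
  Qq : ∀ w ∈ Q, w = q (d w)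
  adj : ∀ w w', T.Adj w w' → d w < d w' → d w' = d w + 1 ∧ w' = q (d w') ∧ (1 ≤ d w → w = q (d w))

theorem exists_coord (hT : T.IsTree) {x z : W} (p : T.Walk x z) (hp : p.IsPath) {X : Set W}
    (hX : ∀ w ∈ p.support, w ∈ X) (hBr : ∀ w w', w ∈ X → w' ∉ X → T.Adj w w' → w = x) :
    ∃ q d, Coord T X {w | w ∈ p.support} (p.length + 1) q d := by
  classical
  set H := T.deleteEdges {e | e ∈ p.edges} with hH
  have hex : ∀ w, ∃ i ≤ p.length, H.Reachable w (p.getVert i) := by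
    intro w
    obtain ⟨r⟩ := hT.1.preconnected w x
    induction r with
    | nil => exact ⟨0, by omega, by rw [Walk.getVert_zero]⟩
    | @cons a b c hab r ih =>
      by_cases he : s(a, b) ∈ p.edges
      · obtain ⟨i, hi, hle⟩ := Walk.mem_support_iff_exists_getVert.1
          (p.fst_mem_support_of_mem_edges he)
        exact ⟨i, hle, by rw [hi]⟩
      · obtain ⟨i, hi, hr⟩ := ih p hp hX hBr hH
        refine ⟨i, hi, Reachable.trans (Adj.reachable ?_) hr⟩
        rw [hH, deleteEdges_adj]
        exact ⟨hab, he⟩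
  have huniq : ∀ i j, i < j → j ≤ p.length → ¬ H.Reachable (p.getVert i) (p.getVert j) := by
    intro i j hij hj hr
    have hadj := p.adj_getVert_succ (i := i) (by omega)
    have hb := isBridge_iff.1 (isAcyclic_iff_forall_adj_isBridge.1 hT.isAcyclic hadj)
    have hle : H ≤ T.deleteEdges {s(p.getVert i, p.getVert (i + 1))} := by
      rw [hH]
      apply deleteEdges_anti
      rintro e rfl
      exact (Walk.mk_mem_edges_iff_exists p).2 ⟨i, by omega, rfl⟩
    have hback : ∀ k, i + 1 ≤ k → k ≤ p.length →
        (T.deleteEdges {s(p.getVert i, p.getVert (i + 1))}).Reachable (p.getVert k)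
          (p.getVert (i + 1)) := by
      intro k hk
      induction k, hk using Nat.le_induction with
      | base => intro _; rfl
      | succ k hk ih =>
        intro hkl
        refine Reachable.trans (Adj.reachable ?_) (ih (by omega))
        rw [deleteEdges_adj]
        refine ⟨(p.adj_getVert_succ (i := k) (by omega)).symm, ?_⟩
        intro he
        rw [Set.mem_singleton_iff, Sym2.eq_iff] at he
        rcases he with he | he
        · have := hp.getVert_injOn (by simp; omega) (by simp; omega) he.1
          omega
        · have := hp.getVert_injOn (by simp; omega) (by simp; omega) he.2
          omega
    exact hb ((hr.mono hle).trans (hback j (by omega) hj))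
  choose c hc hcr using hex
  have hceq : ∀ w i, i ≤ p.length → H.Reachable w (p.getVert i) → c w = i := by
    intro w i hi hr
    rcases lt_trichotomy (c w) i with h | h | h
    · exact absurd ((hcr w).symm.trans hr) (huniq _ _ h hi)
    · exact h
    · exact absurd (hr.symm.trans (hcr w)) (huniq _ _ h (hc w))
  have hcg : ∀ i, i ≤ p.length → c (p.getVert i) = i := fun i hi => hceq _ i hi (Reachable.refl _)
  refine ⟨fun i => p.getVert (i - 1), fun w => if w ∈ X then c w + 1 else 0, ?_, ?_, ?_, ?_, ?_, ?_⟩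
  · intro w
    by_cases hw : w ∈ X <;> simp [hw]
  · intro w
    have := hc w
    split_ifs <;> omega
  · intro i _ _
    exact p.getVert_mem_support _
  · intro i h1 h2
    rw [if_pos (hX _ (p.getVert_mem_support _)), hcg _ (by omega)]
    omega
  · intro w hw
    rw [if_pos (hX _ hw)]
    obtain ⟨i, rfl, hi⟩ := Walk.mem_support_iff_exists_getVert.1 hw
    rw [hcg i hi]
    simp
  · intro w w' hadj hlt
    have hw'X : w' ∈ X := by
      by_contra hn
      simp [hn] at hlt
    by_cases hwX : w ∈ X
    · rw [if_pos hw'X, if_pos hwX] at *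
      have he : s(w, w') ∈ p.edges := by
        by_contra he
        have : H.Adj w w' := by
          rw [hH, deleteEdges_adj]; exact ⟨hadj, he⟩
        have := hceq w (c w') (hc w') (this.reachable.trans (hcr w'))
        omega
      obtain ⟨i, hi, e⟩ := (Walk.mk_mem_edges_iff_exists p).1 he
      rw [Sym2.eq_iff] at e
      rcases e with ⟨rfl, rfl⟩ | ⟨rfl, rfl⟩
      · rw [hcg i (by omega), hcg (i + 1) (by omega)]
        simp
      · rw [hcg i (by omega), hcg (i + 1) (by omega)] at hlt
        omega
    · have hx := hBr w' w hw'X hwX hadj.symm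
      subst hx
      have : c w' = 0 := by
        have := hcg 0 (by omega)
        rwa [Walk.getVert_zero] at this
      simp [hwX, hw'X, this]

theorem Coord.F {X Q : Set W} {n : ℕ} {q : ℕ → W} {d : W → ℕ} (h : Coord T X Q n q d) {S : Set W}
    (hS : (T.induce S).Connected) {w w' : W} (hw : w ∈ S) (hw' : w' ∈ S) (hlt : d w < d w')
    {i : ℕ} (h1 : 1 ≤ i) (h2 : d w ≤ i) (h3 : i ≤ d w') : q i ∈ S := by
  obtain ⟨p, hp⟩ := walk_of_conn hS hw hw'
  clear hw hw'
  induction p with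
  | nil => omega
  | @cons a b c hab r ih =>
    have ha : a ∈ S := hp a (by simp)
    have hb : b ∈ S := hp b (by simp)
    by_cases hc1 : d b ≤ i
    · by_cases hc2 : d b < d c
      · exact ih hc2 hc1 h3 (fun x hx => hp x (by simp [hx]))
      · have hi : i = d b := by omega
        have := (h.adj a b hab (by omega)).2.1
        rw [hi, ← this]; exact hb
    · have := h.adj a b hab (by omega)
      have hi : i = d a := by omega
      rw [hi, ← this.2.2 (by omega)]; exact ha

/-- The component of `s` containing `a`. -/
def Comp (T : SimpleGraph W) (s : Set W) (a : W) : Set W :=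
  {w | ∃ p : T.Walk a w, ∀ x ∈ p.support, x ∈ s}

theorem comp_isComp {s : Set W} {a : W} (ha : a ∈ s) : IsCompOf T s (Comp T s a) := by
  classical
  have haC : a ∈ Comp T s a := ⟨Walk.nil, by simpa using ha⟩
  refine ⟨⟨a, haC⟩, ?_, ?_, ?_⟩
  · rintro w ⟨p, hp⟩
    exact hp w (by simp)
  · refine induce_connected_of_patches a haC ?_
    rintro v ⟨p, hp⟩
    refine ⟨{x | x ∈ p.support}, ?_, by simp, by simp, ?_⟩
    · intro x hx
      exact ⟨p.takeUntil x hx, fun y hy => hp y (p.support_takeUntil_subset_support hx hy)⟩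
    · exact p.connected_induce_support.preconnected _ _
  · rintro u v ⟨p, hp⟩ hv hadj
    refine ⟨p.concat hadj, ?_⟩
    intro y hy
    rw [Walk.support_concat] at hy
    simp at hy
    rcases hy with hy | rfl
    · exact hp y hy
    · exact hv

theorem comp_eq {s S : Set W} {a b : W} (hS : (T.induce S).Connected) (hSs : S ⊆ s)
    (ha : a ∈ S) (hb : b ∈ S) : Comp T s a = Comp T s b := by
  have key : ∀ a b, a ∈ S → b ∈ S → Comp T s a ⊆ Comp T s b := by
    rintro a b ha hb w ⟨p, hp⟩
    obtain ⟨r, hr⟩ := walk_of_conn hS hb ha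
    refine ⟨r.append p, ?_⟩
    intro x hx
    rw [Walk.mem_support_append_iff] at hx
    rcases hx with hx | hx
    · exact hSs (hr x hx)
    · exact hp x hx
  exact Set.Subset.antisymm (key a b ha hb) (key b a hb ha)

theorem sub_comp {s S : Set W} {a : W} (hS : (T.induce S).Connected) (hSs : S ⊆ s)
    (ha : a ∈ S) : S ⊆ Comp T s a := by
  intro b hb
  obtain ⟨r, hr⟩ := walk_of_conn hS ha hb
  exact ⟨r, fun x hx => hSs (hr x hx)⟩

theorem comp_root (hT : T.IsTree) {X Q Y : Set W} {x : W} (hxQ : x ∈ Q)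
    (hQ : (T.induce Q).Connected) (hBr : ∀ w w', w ∈ X → w' ∉ X → T.Adj w w' → w = x)
    (hY : IsCompOf T (X \ Q) Y) :
    ∃ x' ∈ Y, (∃ u ∈ Q, T.Adj u x') ∧ ∀ w w', w ∈ Y → w' ∉ Y → T.Adj w w' → w = x' := by
  obtain ⟨⟨a, ha⟩, hsub, hconn, hcl⟩ := hY
  have hout : ∀ w w', w ∈ Y → w' ∉ Y → T.Adj w w' → w' ∈ Q := by
    intro w w' hw hw' hadj
    by_contra hn
    by_cases hX : w' ∈ X
    · exact hw' (hcl hw ⟨hX, hn⟩ hadj)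
    · have := hBr w w' (hsub hw).1 hX hadj
      exact (hsub hw).2 (this ▸ hxQ)
  obtain ⟨p⟩ := hT.1.preconnected a x
  obtain ⟨e, -, h1, h2⟩ := p.exists_boundary_dart Y ha (fun h => (hsub h).2 hxQ)
  have hq := hout _ _ h1 h2 e.adj
  refine ⟨e.fst, h1, ⟨e.snd, hq, e.adj.symm⟩, ?_⟩
  intro w w' hw hw' hadj
  exact (two_edge hT hconn hQ (fun y hy => (hsub hy).2) hw h1 (hout _ _ hw hw' hadj) hq hadj
    e.adj).1

end tree
end LPT

namespace LPT

section
variable {V W : Type} {T : SimpleGraph W}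

/-- `t` is a core point of the list `l`. -/
def Core (S : V → Set W) (l : List V) (t : W) : Prop :=
  ∃ L u w R, l = L ++ u :: w :: R ∧ t ∈ S u ∧ t ∈ S w

theorem chain_core {S : V → Set W} {l : List V}
    (h : l.IsChain (fun u w => (S u ∩ S w).Nonempty)) :
    l.IsChain (fun u w => ∃ t, t ∈ S u ∧ t ∈ S w ∧ Core S l t) := by
  rw [List.isChain_iff_forall_rel_of_append_cons_cons] at h ⊢
  intro a b l1 l2 e
  obtain ⟨t, h1, h2⟩ := h e
  exact ⟨t, h1, h2, l1, a, b, l2, e, h1, h2⟩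

theorem Core.mem {S : V → Set W} {l : List V} {t : W} (h : Core S l t) : ∃ u ∈ l, t ∈ S u := by
  obtain ⟨L, u, w, R, rfl, h1, h2⟩ := h
  exact ⟨u, by simp, h1⟩

theorem Core.reverse {S : V → Set W} {l : List V} {t : W} (h : Core S l t) :
    Core S l.reverse t := by
  obtain ⟨L, u, w, R, rfl, h1, h2⟩ := h
  exact ⟨R.reverse, w, u, L.reverse, by simp, h2, h1⟩

theorem step1 {X Q : Set W} {n : ℕ} {q : ℕ → W} {d : W → ℕ} (hC : Coord T X Q n q d)
    {S : V → Set W} (hS : ∀ u, (T.induce (S u)).Connected) {F : Set (List V)} {Fb : Set V}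
    (hne : F.Nonempty) (hch : ∀ l ∈ F, l.IsChain (fun u w => (S u ∩ S w).Nonempty))
    (hFb : ∀ l ∈ F, ∀ u ∈ l, u ∉ Fb) (hInter : ∀ l ∈ F, ∀ l' ∈ F, ∃ u ∈ l, u ∈ l') {lo hi : ℕ}
    (hlo : 1 ≤ lo) (hcore : ∀ l ∈ F, ∃ t, Core S l t ∧ lo ≤ d t ∧ d t ≤ hi) :
    ∃ y, lo ≤ y ∧ y ≤ hi ∧
      ((∃ α, lo ≤ α ∧ α ≤ y ∧ (∃ v, v ∉ Fb ∧ ∀ j, α ≤ j → j ≤ y → q j ∈ S v) ∧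
        ∀ l ∈ F, ∃ t, Core S l t ∧ α ≤ d t ∧ d t ≤ y) ∨
      ∃ l ∈ F, ∀ w ∈ l, ∀ t ∈ S w, d t = y ∧ t ≠ q y) := by
  classical
  have hmin : ∀ l ∈ F, ∃ m, (∃ t, Core S l t ∧ d t = m ∧ lo ≤ m ∧ m ≤ hi) ∧
      ∀ t, Core S l t → lo ≤ d t → m ≤ d t := by
    intro l hl
    have hex : ∃ m, ∃ t, Core S l t ∧ d t = m ∧ lo ≤ m ∧ m ≤ hi := by
      obtain ⟨t, h1, h2, h3⟩ := hcore l hl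
      exact ⟨d t, t, h1, rfl, h2, h3⟩
    refine ⟨Nat.find hex, Nat.find_spec hex, ?_⟩
    intro t h1 h2
    by_cases h3 : d t ≤ hi
    · exact Nat.find_min' hex ⟨t, h1, rfl, h2, h3⟩
    · obtain ⟨_, _, _, _, h4⟩ := Nat.find_spec hex
      omega
  obtain ⟨y, ⟨P1, hP1, ⟨t1, ht1, hd1, hly, hyh⟩, hP1min⟩, hmax⟩ := exists_max
    (fun m => ∃ l ∈ F, (∃ t, Core S l t ∧ d t = m ∧ lo ≤ m ∧ m ≤ hi) ∧
      ∀ t, Core S l t → lo ≤ d t → m ≤ d t) (fun m => m) hi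
    (by
      obtain ⟨l, hl⟩ := hne
      obtain ⟨m, hm⟩ := hmin l hl
      exact ⟨m, l, hl, hm⟩)
    (by rintro m ⟨l, hl, ⟨t, _, _, _, h⟩, _⟩; exact h)
  have hlow : ∀ l ∈ F, ∃ t, Core S l t ∧ lo ≤ d t ∧ d t ≤ y := by
    intro l hl
    obtain ⟨m, ⟨t, h1, h2, h3, h4⟩, h5⟩ := hmin l hl
    have := hmax m ⟨l, hl, ⟨t, h1, h2, h3, h4⟩, h5⟩
    exact ⟨t, h1, by omega, by omega⟩
  refine ⟨y, hly, hyh, ?_⟩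
  by_cases hv : ∃ v, v ∉ Fb ∧ q y ∈ S v
  swap
  · right
    push Not at hv
    refine ⟨P1, hP1, ?_⟩
    obtain ⟨u, hu, htu⟩ := ht1.mem
    have hone : ∀ w ∈ P1, ∀ t ∈ S w, d t = y → ∀ t' ∈ S w, d t' = y := by
      intro w hw t ht hdt t' ht'
      by_contra hnd
      refine hv w (hFb _ hP1 w hw) ?_
      rcases lt_or_gt_of_ne hnd with h | h
      · exact hC.F (hS w) ht' ht (by omega) (by omega) (by omega) (by omega)
      · exact hC.F (hS w) ht ht' (by omega) (by omega) (by omega) (by omega)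
    have hall := chain_iff (l := P1) (p := fun w => ∀ t ∈ S w, d t = y) (by
      refine List.IsChain.imp_of_mem_imp ?_ (chain_core (hch P1 hP1))
      rintro a b ha hb ⟨t, hta, htb, -⟩
      exact ⟨fun h => hone b hb t htb (h t hta), fun h => hone a ha t hta (h t htb)⟩)
      u hu (hone u hu t1 htu hd1)
    intro w hw t ht
    refine ⟨hall w hw t ht, ?_⟩
    rintro rfl
    exact hv w (hFb _ hP1 w hw) ht
  left
  have hexα : ∃ α, lo ≤ α ∧ α ≤ y ∧ ∃ v, v ∉ Fb ∧ ∀ j, α ≤ j → j ≤ y → q j ∈ S v := by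
    obtain ⟨v, h1, h2⟩ := hv
    exact ⟨y, hly, le_rfl, v, h1, fun j h3 h4 => (by omega : y = j) ▸ h2⟩
  obtain ⟨hα1, hα2, v, hvF, hvq⟩ := Nat.find_spec hexα
  have hαmin : ∀ β, lo ≤ β → β ≤ y → (∃ v, v ∉ Fb ∧ ∀ j, β ≤ j → j ≤ y → q j ∈ S v) →
      Nat.find hexα ≤ β := fun β h1 h2 h3 => Nat.find_min' hexα ⟨h1, h2, h3⟩
  generalize Nat.find hexα = α at *
  refine ⟨α, hα1, hα2, ⟨v, hvF, hvq⟩, ?_⟩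
  by_contra hcon
  push Not at hcon
  obtain ⟨P', hP', hno⟩ := hcon
  obtain ⟨t', ht', hlt', hdt'⟩ := hlow P' hP'
  have ht'α : d t' < α := by
    by_contra hh
    have := hno t' ht' (by omega)
    omega
  have hall1 : ∀ w ∈ P1, ∃ t ∈ S w, y ≤ d t := by
    obtain ⟨u, hu, htu⟩ := ht1.mem
    have hone : ∀ a ∈ P1, ∀ t, t ∈ S a → Core S P1 t → (∃ t ∈ S a, y ≤ d t) → y ≤ d t := by
      rintro a ha t hta hct ⟨s, hs, hds⟩
      by_contra hlt
      have h1 : d t < lo := by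
        by_contra hh
        have := hP1min t hct (by omega)
        omega
      have := hαmin lo le_rfl hly ⟨a, hFb _ hP1 a ha, fun j h2 h3 =>
        hC.F (hS a) hta hs (by omega) (by omega) (by omega) (by omega)⟩
      omega
    refine chain_iff (l := P1) (p := fun w => ∃ t ∈ S w, y ≤ d t) ?_ u hu ⟨t1, htu, by omega⟩
    refine List.IsChain.imp_of_mem_imp ?_ (chain_core (hch P1 hP1))
    rintro a b ha hb ⟨t, hta, htb, hct⟩
    exact ⟨fun h => ⟨t, htb, hone a ha t hta hct h⟩, fun h => ⟨t, hta, hone b hb t htb hct h⟩⟩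
  have hall2 : ∀ w ∈ P', ∃ t ∈ S w, d t < α := by
    obtain ⟨u, hu, htu⟩ := ht'.mem
    have hone : ∀ a ∈ P', ∀ t, t ∈ S a → Core S P' t → (∃ t ∈ S a, d t < α) → d t < α := by
      rintro a ha t hta hct ⟨s, hs, hds⟩
      by_contra hlt
      have h1 := hno t hct (by omega)
      have := hαmin (α - 1) (by omega) (by omega) ⟨a, hFb _ hP' a ha, fun j h2 h3 =>
        hC.F (hS a) hs hta (by omega) (by omega) (by omega) (by omega)⟩
      omega
    refine chain_iff (l := P') (p := fun w => ∃ t ∈ S w, d t < α) ?_ u hu ⟨t', htu, by omega⟩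
    refine List.IsChain.imp_of_mem_imp ?_ (chain_core (hch P' hP'))
    rintro a b ha hb ⟨t, hta, htb, hct⟩
    exact ⟨fun h => ⟨t, htb, hone a ha t hta hct h⟩, fun h => ⟨t, hta, hone b hb t htb hct h⟩⟩
  obtain ⟨w, hw1, hw2⟩ := hInter P1 hP1 P' hP'
  obtain ⟨s1, hs1, hds1⟩ := hall1 w hw1
  obtain ⟨s2, hs2, hds2⟩ := hall2 w hw2
  have := hαmin (α - 1) (by omega) (by omega) ⟨w, hFb _ hP1 w hw1, fun j h2 h3 =>
    hC.F (hS w) hs2 hs1 (by omega) (by omega) (by omega) (by omega)⟩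
  omega

end
end LPT

namespace LPT

section
variable {V W : Type} {G : SimpleGraph V} {T : SimpleGraph W}

theorem core_of_mem (R : TreeRep G T) {l : List V} (hl : GP G l) (hlen : 2 ≤ l.length) {w : V}
    (hw : w ∈ l) : ∃ t ∈ R.S w, Core R.S l t := by
  have hadj : ∀ a b, G.Adj a b → ∃ t, t ∈ R.S a ∧ t ∈ R.S b := by
    intro a b h
    obtain ⟨t, h1, h2⟩ := (R.adj_iff a b h.ne).1 h
    exact ⟨t, h1, h2⟩
  obtain ⟨A, B, e⟩ := List.append_of_mem hw
  cases B with
  | cons b B =>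
    obtain ⟨t, h1, h2⟩ := hadj w b (adj_of_consec hl e)
    exact ⟨t, h1, A, w, b, B, e, h1, h2⟩
  | nil =>
    rcases List.eq_nil_or_concat A with rfl | ⟨A', a, rfl⟩
    · rw [e] at hlen; simp at hlen
    · have e' : l = A' ++ a :: w :: [] := by rw [e]; simp
      obtain ⟨t, h1, h2⟩ := hadj a w (adj_of_consec hl e')
      exact ⟨t, h2, A', a, w, [], e', h1, h2⟩

theorem chain_meet (R : TreeRep G T) {l : List V} (hl : GP G l) :
    l.IsChain (fun u w => (R.S u ∩ R.S w).Nonempty) :=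
  hl.1.imp (fun a b h => (R.adj_iff a b h.ne).1 h)

/-- If some longest path lives entirely off the cut path, there is a single component met by
all longest paths. -/
theorem exit_case (R : TreeRep G T) (hconn : G.Connected) (hN : ∀ l, LP G l → 2 ≤ l.length)
    {s : Set W} {l : List V} (hl : LP G l) (hs : ∀ w ∈ l, R.S w ⊆ s) :
    ∃ Y, IsCompOf T s Y ∧ ∀ l', LP G l' → ∃ t ∈ Y, Core R.S l' t := by
  obtain ⟨u0, hu0⟩ := List.exists_mem_of_ne_nil _ hl.1
  obtain ⟨⟨t0, ht0⟩⟩ := (R.subtree_connected u0).nonempty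
  refine ⟨Comp T s t0, comp_isComp (hs u0 hu0 ht0), ?_⟩
  have hstep : ∀ b ∈ l, ∀ t ∈ R.S b, t ∈ Comp T s t0 → R.S b ⊆ Comp T s t0 := by
    rintro b hb t ht ⟨p, hp⟩ y hy
    obtain ⟨r, hr⟩ := walk_of_conn (R.subtree_connected b) ht hy
    refine ⟨p.append r, ?_⟩
    intro x hx
    rw [Walk.mem_support_append_iff] at hx
    rcases hx with hx | hx
    · exact hp x hx
    · exact hs b hb (hr x hx)
  have hall := chain_iff (l := l) (p := fun w => R.S w ⊆ Comp T s t0) (by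
    refine List.IsChain.imp_of_mem_imp ?_ (chain_meet R hl.2.1)
    rintro a b ha hb ⟨t, hta, htb⟩
    exact ⟨fun h => hstep b hb t htb (h hta), fun h => hstep a ha t hta (h htb)⟩) u0 hu0
    (sub_comp (R.subtree_connected u0) (hs u0 hu0) ht0)
  intro l' hl'
  obtain ⟨w, hw, hw'⟩ := LP.inter hconn hl hl'
  obtain ⟨t, ht, hc⟩ := core_of_mem R hl'.2.1 (hN l' hl') hw'
  exact ⟨t, hall w hw ht, hc⟩

theorem round (R : TreeRep G T) (hconn : G.Connected) (hN : ∀ l, LP G l → 2 ≤ l.length)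
    {X : Set W} {x z : W} (p : T.Walk x z) (hp : p.IsPath) (hX : ∀ w ∈ p.support, w ∈ X)
    (hBr : ∀ w w', w ∈ X → w' ∉ X → T.Adj w w' → w = x) (A : Finset V)
    (hInv : ∀ l, LP G l → (∀ a ∈ A, a ∉ l) → ∃ t ∈ X, Core R.S l t) :
    ∃ B : Finset V, B.card ≤ 8 ∧
      ((∀ l, LP G l → (∀ a ∈ A, a ∉ l) → ∃ b ∈ B, b ∈ l) ∨
        ∃ Y, IsCompOf T (X \ {w | w ∈ p.support}) Y ∧
          ∀ l, LP G l → (∀ a ∈ A, a ∉ l) → (∀ b ∈ B, b ∉ l) → ∃ t ∈ Y, Core R.S l t) := by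
  classical
  obtain ⟨q, d, hC⟩ := exists_coord R.isTree p hp hX hBr
  set Q : Set W := {w | w ∈ p.support} with hQ
  set n := p.length + 1 with hn
  have hexit : ∀ l y, LP G l → 1 ≤ y → (∀ w ∈ l, ∀ t ∈ R.S w, d t = y ∧ t ≠ q y) →
      ∃ Y, IsCompOf T (X \ Q) Y ∧ ∀ l', LP G l' → ∃ t ∈ Y, Core R.S l' t := by
    intro l y hl hy hh
    refine exit_case R hconn hN hl ?_
    intro w hw t ht
    obtain ⟨h1, h2⟩ := hh w hw t ht
    refine ⟨(hC.mem t).2 (by omega), fun htQ => h2 ?_⟩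
    rw [← h1]
    exact hC.Qq t htQ
  by_cases hF0 : ∃ l, LP G l ∧ ∀ a ∈ A, a ∉ l
  swap
  · refine ⟨∅, by simp, Or.inl ?_⟩
    intro l h1 h2
    exact absurd ⟨l, h1, h2⟩ hF0
  obtain ⟨y1, hy1, hy1n, h1⟩ := step1 (F := {l | LP G l ∧ ∀ a ∈ A, a ∉ l}) (Fb := ∅) (lo := 1)
    (hi := n) hC R.subtree_connected hF0 (fun l hl => chain_meet R hl.1.2.1) (by simp)
    (fun l hl l' hl' => LP.inter hconn hl.1 hl'.1) le_rfl (by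
      rintro l ⟨hl, hlA⟩
      obtain ⟨t, htX, ht⟩ := hInv l hl hlA
      exact ⟨t, ht, (hC.mem t).1 htX, hC.le t⟩)
  rcases h1 with ⟨α1, hα1, hα1y, ⟨v1, -, hv1⟩, hcov1⟩ | ⟨l, hl, hh⟩
  swap
  · obtain ⟨Y, hY, hY'⟩ := hexit l y1 hl.1 hy1 hh
    exact ⟨∅, by simp, Or.inr ⟨Y, hY, fun l h1 _ _ => hY' l h1⟩⟩
  by_cases hF1 : ∃ l, (LP G l ∧ ∀ a ∈ A, a ∉ l) ∧ v1 ∉ l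
  swap
  · refine ⟨{v1}, by simp, Or.inl ?_⟩
    intro l h1 h2
    by_contra hcon
    exact hF1 ⟨l, ⟨h1, h2⟩, by simpa using hcon⟩
  obtain ⟨y2, hy2, hy2n, h2⟩ := step1 (F := {l | (LP G l ∧ ∀ a ∈ A, a ∉ l) ∧ v1 ∉ l})
    (Fb := {v1}) (lo := α1)
    (hi := y1) hC R.subtree_connected hF1 (fun l hl => chain_meet R hl.1.1.2.1)
    (by rintro l ⟨-, hl⟩ u hu rfl; exact hl hu)
    (fun l hl l' hl' => LP.inter hconn hl.1.1 hl'.1.1) hα1 (fun l hl => hcov1 l hl.1)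
  rcases h2 with ⟨α2, hα2, hα2y, ⟨v2, hv12, hv2⟩, hcov2⟩ | ⟨l, hl, hh⟩
  swap
  · obtain ⟨Y, hY, hY'⟩ := hexit l y2 hl.1.1 (by omega) hh
    exact ⟨∅, by simp, Or.inr ⟨Y, hY, fun l h1 _ _ => hY' l h1⟩⟩
  have hadjS : ∀ a b t, a ≠ b → t ∈ R.S a → t ∈ R.S b → G.Adj a b := fun a b t hab h1 h2 =>
    (R.adj_iff a b hab).2 ⟨t, h1, h2⟩
  set K : Set V := {u | ∃ i, α2 ≤ i ∧ i ≤ y2 ∧ q i ∈ R.S u} with hK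
  set D : Set V := {u | u ∉ K ∧ ∃ t ∈ R.S u, α2 ≤ d t ∧ d t ≤ y2} with hD
  have hDs : ∀ u ∈ D, ∀ t ∈ R.S u, t ∈ X \ Q ∧ α2 ≤ d t ∧ d t ≤ y2 := by
    rintro u ⟨huK, t, ht, h1, h2⟩ t' ht'
    have he : d t' = d t := by
      by_contra hne
      apply huK
      refine ⟨d t, h1, h2, ?_⟩
      rcases lt_or_gt_of_ne hne with h | h
      · exact hC.F (R.subtree_connected u) ht' ht h (by omega) (by omega) (by omega)
      · exact hC.F (R.subtree_connected u) ht ht' h (by omega) (by omega) (by omega)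
    refine ⟨⟨(hC.mem t').2 (by omega), fun htQ => huK ⟨d t', by omega, by omega, ?_⟩⟩,
      by omega, by omega⟩
    rw [← hC.Qq t' htQ]; exact ht'
  have hpt : ∀ u, ∃ t, t ∈ R.S u := fun u => by
    obtain ⟨⟨t, ht⟩⟩ := (R.subtree_connected u).nonempty
    exact ⟨t, ht⟩
  choose pt hpt using hpt
  have H : Setup G {l | ((LP G l ∧ ∀ a ∈ A, a ∉ l) ∧ v1 ∉ l) ∧ v2 ∉ l} K D
      (fun u => Comp T (X \ Q) (pt u)) v1 v2 := by
    have k1 : ∀ k ∈ K, k ≠ v1 → G.Adj k v1 := by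
      rintro k ⟨i, h1, h2, h3⟩ hk
      exact hadjS _ _ _ hk h3 (hv1 i (by omega) (by omega))
    refine ⟨?_, ?_, ?_, k1, ?_, ?_, ?_, ?_, ?_, ?_, ?_⟩
    · rintro l hl; exact hl.1.1.1
    · rintro l ⟨⟨⟨h1, h2⟩, h3⟩, h4⟩
      exact ⟨⟨⟨h1.reverse, by simpa using h2⟩, by simpa using h3⟩, by simpa using h4⟩
    · rintro rfl; exact hv12 rfl
    · rintro k ⟨i, h1, h2, h3⟩ hk
      exact hadjS _ _ _ hk h3 (hv2 i (by omega) (by omega))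
    · rintro l hl; exact hl.1.2
    · rintro l hl; exact hl.2
    · rintro u hu; exact hu.1
    · intro u w hu hw hadj
      obtain ⟨t, htu, htw⟩ := (R.adj_iff u w hadj.ne).1 hadj
      have h1 := hDs u hu t htu
      have hwD : w ∈ D := ⟨hw, t, htw, h1.2⟩
      refine ⟨hwD, ?_⟩
      exact (comp_eq (R.subtree_connected u) (fun y hy => (hDs u hu y hy).1) (hpt u) htu).trans
        (comp_eq (R.subtree_connected w) (fun y hy => (hDs w hwD y hy).1) htw (hpt w))
    · rintro l ⟨hl1, hl2⟩
      obtain ⟨t, ⟨L, u, w, R', e, htu, htw⟩, h1, h2⟩ := hcov2 l hl1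
      by_cases hu : u ∈ K
      · by_cases hw : w ∈ K
        · exfalso
          have g := hl1.1.1.2.1
          have hv := hl1.2
          have hmx := hl1.1.1.2.2
          subst e
          have gp : GP G (L ++ u :: v1 :: w :: R') := by
            have nd := g.2
            have e2 : L ++ u :: w :: R' = (L ++ [u]) ++ (w :: R') := by simp
            refine GP.glue ?_ ?_ ?_ ?_ ?_ ?_ ?_
            · exact g.subpath ⟨[], w :: R', by simp⟩
            · exact g.subpath ⟨L ++ [u], [], by simp⟩
            · refine k1 u hu ?_
              rintro rfl; simp at hv
            · refine (k1 w hw ?_).symm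
              rintro rfl; simp at hv
            · intro h; apply hv; rw [e2]; exact List.mem_append_left _ h
            · intro h; apply hv; rw [e2]; exact List.mem_append_right _ h
            · rw [e2, List.nodup_append] at nd
              intro y hy hy'
              exact nd.2.2 y hy y hy' rfl
          have := hmx _ gp
          simp at this
        · exact ⟨w, by rw [e]; simp, hw, t, htw, h1, h2⟩
      · exact ⟨u, by rw [e]; simp, hu, t, htu, h1, h2⟩
    · intro l l' h1 h2
      exact LP.inter hconn h1 h2
  obtain ⟨B, hB, hB'⟩ := H.step
  refine ⟨{v1, v2} ∪ B, ?_, ?_⟩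
  · have h1 := Finset.card_union_le {v1, v2} B
    have h2 : ({v1, v2} : Finset V).card ≤ 2 := Finset.card_le_two
    omega
  rcases hB' with hB' | ⟨u0, hu0, hB'⟩
  · left
    intro l h1 h2
    by_contra hcon
    push Not at hcon
    obtain ⟨b, hb, hb'⟩ := hB' l ⟨⟨⟨h1, h2⟩, hcon v1 (by simp)⟩, hcon v2 (by simp)⟩
    exact hcon b (by simp [hb]) hb'
  · right
    refine ⟨Comp T (X \ Q) (pt u0), comp_isComp (hDs u0 hu0 _ (hpt u0)).1, ?_⟩
    intro l h1 h2 hcon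
    rcases hB' l ⟨⟨⟨h1, h2⟩, hcon v1 (by simp)⟩, hcon v2 (by simp)⟩ with ⟨b, hb, hb'⟩ | ⟨u, hu, huD, he⟩
    · exact absurd hb' (hcon b (by simp [hb]))
    · obtain ⟨t, ht, hc⟩ := core_of_mem R h1.2.1 (hN l h1) hu
      refine ⟨t, ?_, hc⟩
      rw [← he]
      exact sub_comp (R.subtree_connected u) (fun y hy => (hDs u huD y hy).1) (hpt u) ht

theorem game (R : TreeRep G T) (hconn : G.Connected) (hN : ∀ l, LP G l → 2 ≤ l.length) :
    ∀ (t : ℕ) (X : Set W) (x : W) (A : Finset V), cutterWins T t X x →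
    (∀ w w', w ∈ X → w' ∉ X → T.Adj w w' → w = x) →
    (∀ l, LP G l → (∀ a ∈ A, a ∉ l) → ∃ t ∈ X, Core R.S l t) →
    ∃ A' : Finset V, A'.card ≤ A.card + 8 * t ∧ ∀ l, LP G l → ∃ b ∈ A', b ∈ l := by
  classical
  intro t
  induction t with
  | zero => intro X x A h; exact h.elim
  | succ t ih =>
    rintro X x A ⟨z, hz, p, hp, hpX, hwin⟩ hBr hInv
    obtain ⟨B, hB, hB'⟩ := round R hconn hN p hp hpX hBr A hInv
    have hcard := Finset.card_union_le A B
    rcases hB' with hB' | ⟨Y, hY, hB'⟩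
    · refine ⟨A ∪ B, by omega, ?_⟩
      intro l hl
      by_cases hA : ∃ a ∈ A, a ∈ l
      · obtain ⟨a, ha, hal⟩ := hA
        exact ⟨a, Finset.mem_union_left _ ha, hal⟩
      · push Not at hA
        obtain ⟨b, hb, hbl⟩ := hB' l hl hA
        exact ⟨b, Finset.mem_union_right _ hb, hbl⟩
    · obtain ⟨x', hx', hadj, hBr'⟩ := comp_root R.isTree (Q := {w | w ∈ p.support}) (x := x)
        (by simp) p.connected_induce_support hBr hY
      have hw' : cutterWins T t Y x' := by
        rcases hwin with hXQ | hwin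
        · obtain ⟨y, hy⟩ := hY.1
          have := hY.2.1 hy
          exact absurd (hXQ ▸ this.1) this.2
        · exact hwin Y x' hY hx' hadj
      obtain ⟨A', hA', hA''⟩ := ih Y x' (A ∪ B) hw' hBr' (by
        intro l hl hAB
        exact hB' l hl (fun a ha => hAB a (Finset.mem_union_left _ ha))
          (fun b hb => hAB b (Finset.mem_union_right _ hb)))
      exact ⟨A', by omega, hA''⟩

theorem cutter_exists [Finite W] : ∀ (n : ℕ) (X : Set W) (x : W), X.ncard ≤ n → x ∈ X →
    cutterWins T n X x := by
  intro n
  induction n with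
  | zero =>
    intro X x h hx
    have := (Set.ncard_eq_zero (Set.toFinite X)).1 (by omega)
    rw [this] at hx
    exact hx.elim
  | succ n ih =>
    intro X x h hx
    refine ⟨x, hx, Walk.nil, by simp, by simpa using hx, Or.inr ?_⟩
    intro X' x' hX' hx' _
    refine ih X' x' ?_ hx'
    have hss : X' ⊂ X := by
      refine ⟨fun y hy => (hX'.2.1 hy).1, fun hsub => ?_⟩
      exact (hX'.2.1 (hsub hx)).2 (by simp)
    have := Set.ncard_lt_ncard hss (Set.toFinite X)
    omega

theorem exists_root [Finite W] [Nonempty W] : ∃ r, cutterWins T (ccg T) Set.univ r := by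
  obtain ⟨r, hr⟩ : ccg T ∈ Set.range fun r : W => ccgOn T Set.univ r :=
    Nat.sInf_mem (Set.range_nonempty _)
  refine ⟨r, ?_⟩
  have : ccgOn T Set.univ r ∈ {t : ℕ | cutterWins T t Set.univ r} :=
    Nat.sInf_mem ⟨_, cutter_exists _ Set.univ r le_rfl trivial⟩
  rw [← hr]
  exact this

end
end LPT

theorem lpt_le_ccg {V W : Type} [Fintype V] [Fintype W] (G : SimpleGraph V)
    (T : SimpleGraph W) (hconn : G.Connected) (hchordal : IsChordal G)
    (R : TreeRep G T) (hmin : R.IsMinimal) :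
    lpt G ≤ (4 * ccg T + 5) * ccg T := by
  have : Nonempty W := R.isTree.1.nonempty
  obtain ⟨r, hr⟩ := LPT.exists_root (T := T)
  have hc : 1 ≤ ccg T := by
    rcases Nat.eq_zero_or_pos (ccg T) with h | h
    · rw [h] at hr; exact hr.elim
    · exact h
  have key : ∃ A : Finset V, A.card ≤ 8 * ccg T ∧ ∀ l, LPT.LP G l → ∃ b ∈ A, b ∈ l := by
    by_cases hN : ∀ l, LPT.LP G l → 2 ≤ l.length
    · obtain ⟨A, hA, hA'⟩ := LPT.game R hconn hN (ccg T) Set.univ r ∅ hr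
        (fun w w' _ h => absurd trivial h) (by
          intro l hl _
          obtain ⟨u, hu⟩ := List.exists_mem_of_ne_nil _ hl.1
          obtain ⟨t, -, ht⟩ := LPT.core_of_mem R hl.2.1 (hN l hl) hu
          exact ⟨t, trivial, ht⟩)
      exact ⟨A, by simpa using hA, hA'⟩
    · push Not at hN
      obtain ⟨l0, hl0, hlen⟩ := hN
      obtain ⟨v, l1, rfl⟩ := List.exists_cons_of_ne_nil hl0.1
      have : l1 = [] := by
        rw [← List.length_eq_zero_iff]
        simp at hlen
        simp [hlen]
      subst this
      refine ⟨{v}, by simp; omega, ?_⟩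
      intro l hl
      obtain ⟨u, hu, hu'⟩ := LPT.LP.inter hconn hl0 hl
      exact ⟨u, by simpa using hu, hu'⟩
  obtain ⟨A, hA, hA'⟩ := key
  have h1 : lpt G ≤ A.card := by
    refine Nat.sInf_le ⟨(A : Set V), A.finite_toSet, Set.ncard_coe_finset A, ?_⟩
    intro a b p hp
    obtain ⟨v, hv, hv'⟩ := hA' _ (LPT.IsLongestPath.lp hp)
    exact ⟨v, by simpa using hv, hv'⟩
  nlinarith
end
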